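/- arXiv:math-ph/0512014 — 7 statements merged into one kernel-verified Lean document; each statement's English description precedes it below -/
import Mathlib

section
/- Let d ≥ 3 and 0 ≤ a < 1. There exists a constant C_a, depending only on a and d, such that for every measurable h : ℝ^d → ℂ with ‖h‖_{2d,0} := sup_{x∈ℝ^d} ⟨x⟩^{2d}|h(x)| < ∞, every η ∈ (0,1], every α ∈ ℝ and every q ∈ ℝ^d, one has ∫_{ℝ^d} |h(p−q)| / |α − |p|²/2 + iη|^{2−a} dp ≤ C_a · ‖h‖_{2d,0} · η^{−(1−a)} / (⟨α⟩^{a/2} · ⟨|q| − √(2|α|)⟩). -/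
open MeasureTheory

open Set Metric Module
open scoped ENNReal

section Polar

variable {E : Type*} [NormedAddCommGroup E] [NormedSpace ℝ E] [FiniteDimensional ℝ E]
  [MeasurableSpace E] [BorelSpace E] [Nontrivial E] (μ : Measure E) [μ.IsAddHaarMeasure]

/-- Integration in polar coordinates for the lower Lebesgue integral. -/
theorem lintegral_eq_lintegral_Ioi_toSphere {f : E → ℝ≥0∞} (hf : Measurable f) :
    ∫⁻ x, f x ∂μ = ∫⁻ s in Ioi (0 : ℝ), ENNReal.ofReal (s ^ (finrank ℝ E - 1)) *
      ∫⁻ ω : sphere (0 : E) 1, f (s • (ω : E)) ∂μ.toSphere := by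
  have hmeas : Measurable fun z : sphere (0 : E) 1 × Ioi (0 : ℝ) ↦ f ((z.2 : ℝ) • (z.1 : E)) := by
    fun_prop
  have hmeas' : Measurable fun s : Ioi (0 : ℝ) ↦
      ∫⁻ ω : sphere (0 : E) 1, f ((s : ℝ) • (ω : E)) ∂μ.toSphere := hmeas.lintegral_prod_left'
  calc
    ∫⁻ x, f x ∂μ = ∫⁻ x : ({(0)}ᶜ : Set E), f x ∂(μ.comap (↑)) := by
      rw [lintegral_subtype_comap (measurableSet_singleton _).compl, restrict_compl_singleton]
    _ = ∫⁻ z, f ((z.2 : ℝ) • (z.1 : E)) ∂μ.toSphere.prod (.volumeIoiPow (finrank ℝ E - 1)) := by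
      rw [← μ.measurePreserving_homeomorphUnitSphereProd.lintegral_comp hmeas]
      refine lintegral_congr fun x ↦ ?_
      congr 1
      have hx : ‖(x : E)‖ ≠ 0 := norm_ne_zero_iff.2 x.2
      simp [smul_smul, hx]
    _ = ∫⁻ s : Ioi (0 : ℝ), ∫⁻ ω : sphere (0 : E) 1, f ((s : ℝ) • (ω : E)) ∂μ.toSphere
          ∂.volumeIoiPow (finrank ℝ E - 1) := lintegral_prod_symm' _ hmeas
    _ = _ := by
      rw [Measure.volumeIoiPow, lintegral_withDensity_eq_lintegral_mul _ (by fun_prop) hmeas',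
        ← lintegral_subtype_comap measurableSet_Ioi]
      rfl

/-- A weight `(1 + ‖x - q‖) ^ (-2n)` in dimension `n > 2` integrates over the sphere of radius `s`
to at most a multiple of `min 1 s * (1 + |s - ‖q‖|) ^ (-2)`, uniformly in the centre `q`. -/
theorem exists_lintegral_sphere_weight_le (hn : 2 < finrank ℝ E) :
    ∃ C : ℝ≥0∞, C ≠ ∞ ∧ ∀ q : E, ∀ s : ℝ, 0 < s →
      ENNReal.ofReal (s ^ (finrank ℝ E - 1)) * ∫⁻ ω : sphere (0 : E) 1,
          ENNReal.ofReal ((1 + ‖s • (ω : E) - q‖) ^ (-(2 * finrank ℝ E : ℝ))) ∂μ.toSphere ≤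
        C * ENNReal.ofReal (min 1 s * (1 + |s - ‖q‖|) ^ (-2 : ℝ)) := by
  set n := finrank ℝ E with hn_def
  have hn' : (2 : ℝ) < n := by exact_mod_cast hn
  set k : ℝ := 2 * n - 2 with hk
  set W : ℝ≥0∞ := ∫⁻ x, ENNReal.ofReal ((1 + ‖x‖) ^ (-k)) ∂μ with hW
  have hWtop : W ≠ ∞ := (finite_integral_one_add_norm (by rw [← hn_def]; linarith)).ne
  refine ⟨ENNReal.ofReal (2 ^ k) * W + μ.toSphere univ, by finiteness, fun q s hs ↦ ?_⟩
  set A : ℝ := (1 + |s - ‖q‖|) ^ (-2 : ℝ) with hA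
  have hA0 : 0 ≤ A := by positivity
  have hdist (ω : sphere (0 : E) 1) : |s - ‖q‖| ≤ ‖s • (ω : E) - q‖ := by
    have h := abs_norm_sub_norm_le (s • (ω : E)) q
    rwa [norm_smul, norm_eq_of_mem_sphere ω, mul_one, Real.norm_of_nonneg hs.le] at h
  have hpoint (ω : sphere (0 : E) 1) :
      (1 + ‖s • (ω : E) - q‖) ^ (-(2 * n : ℝ)) ≤ A * (1 + ‖s • (ω : E) - q‖) ^ (-k) := by
    rw [show -(2 * n : ℝ) = -2 + -k by rw [hk]; ring, Real.rpow_add (by positivity)]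
    gcongr
    exact Real.rpow_le_rpow_of_nonpos (by positivity) (by linarith [hdist ω]) (by norm_num)
  have hle_one (ω : sphere (0 : E) 1) : (1 + ‖s • (ω : E) - q‖) ^ (-k) ≤ 1 :=
    Real.rpow_le_one_of_one_le_of_nonpos (by linarith [norm_nonneg (s • (ω : E) - q)])
      (by linarith)
  rcases le_total s 1 with hs1 | hs1
  · have hpow : s ^ (n - 1) ≤ s := pow_le_of_le_one hs.le hs1 (by omega)
    calc
      _ ≤ ENNReal.ofReal s * ∫⁻ ω : sphere (0 : E) 1, ENNReal.ofReal A ∂μ.toSphere := by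
        gcongr with ω
        exact (hpoint ω).trans (mul_le_of_le_one_right hA0 (hle_one ω))
      _ = μ.toSphere univ * ENNReal.ofReal (s * A) := by
        rw [lintegral_const, ENNReal.ofReal_mul hs.le]
        ring
      _ ≤ _ := by
        rw [min_eq_right hs1]
        gcongr
        exact le_add_self
  · have hshift (t : ℝ) (ht : t ∈ Ioc s (s + 1)) (ω : sphere (0 : E) 1) :
        (1 + ‖s • (ω : E) - q‖) ^ (-k) ≤ 2 ^ k * (1 + ‖t • (ω : E) - q‖) ^ (-k) := by
      have h1 : ‖t • (ω : E) - q‖ ≤ ‖s • (ω : E) - q‖ + 1 := by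
        calc ‖t • (ω : E) - q‖ = ‖(s • (ω : E) - q) + (t - s) • (ω : E)‖ := by
              congr 1; rw [sub_smul]; abel
          _ ≤ ‖s • (ω : E) - q‖ + ‖(t - s) • (ω : E)‖ := norm_add_le _ _
          _ ≤ _ := by
              rw [norm_smul, norm_eq_of_mem_sphere ω, mul_one, Real.norm_of_nonneg
                (by linarith [ht.1])]
              linarith [ht.2]
      have h2 : (1 + ‖t • (ω : E) - q‖) / 2 ≤ 1 + ‖s • (ω : E) - q‖ := by
        linarith [norm_nonneg (s • (ω : E) - q)]
      calc _ ≤ ((1 + ‖t • (ω : E) - q‖) / 2) ^ (-k) :=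
            Real.rpow_le_rpow_of_nonpos (by positivity) h2 (by linarith)
        _ = _ := by
            rw [Real.div_rpow (by positivity) (by positivity), Real.rpow_neg (x := 2) (by norm_num),
              div_inv_eq_mul, mul_comm]
    have hmeas : Measurable fun x : E ↦ ENNReal.ofReal ((1 + ‖x - q‖) ^ (-k)) := by fun_prop
    calc
      _ = ∫⁻ t in Ioc s (s + 1), ENNReal.ofReal (s ^ (n - 1)) * ∫⁻ ω : sphere (0 : E) 1,
          ENNReal.ofReal ((1 + ‖s • (ω : E) - q‖) ^ (-(2 * n : ℝ))) ∂μ.toSphere := by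
        simp
      _ ≤ ∫⁻ t in Ioc s (s + 1), ENNReal.ofReal (2 ^ k * A) * (ENNReal.ofReal (t ^ (n - 1)) *
          ∫⁻ ω : sphere (0 : E) 1,
            ENNReal.ofReal ((1 + ‖t • (ω : E) - q‖) ^ (-k)) ∂μ.toSphere) := by
        refine setLIntegral_mono' measurableSet_Ioc fun t ht ↦ ?_
        rw [mul_left_comm,
          ← lintegral_const_mul' (ENNReal.ofReal (2 ^ k * A)) _ ENNReal.ofReal_ne_top]
        gcongr with ω
        · exact ht.1.le
        · rw [← ENNReal.ofReal_mul (by positivity)]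
          gcongr
          calc _ ≤ A * (1 + ‖s • (ω : E) - q‖) ^ (-k) := hpoint ω
            _ ≤ A * (2 ^ k * (1 + ‖t • (ω : E) - q‖) ^ (-k)) := by gcongr; exact hshift t ht ω
            _ = _ := by ring
      _ ≤ ∫⁻ t in Ioi 0, ENNReal.ofReal (2 ^ k * A) * (ENNReal.ofReal (t ^ (n - 1)) *
          ∫⁻ ω : sphere (0 : E) 1,
            ENNReal.ofReal ((1 + ‖t • (ω : E) - q‖) ^ (-k)) ∂μ.toSphere) :=
        lintegral_mono_set fun t ht ↦ hs.trans ht.1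
      _ = ENNReal.ofReal (2 ^ k * A) * W := by
        rw [lintegral_const_mul' _ _ ENNReal.ofReal_ne_top,
          ← lintegral_eq_lintegral_Ioi_toSphere μ hmeas,
          lintegral_sub_right_eq_self (fun x ↦ ENNReal.ofReal ((1 + ‖x‖) ^ (-k)))]
      _ = (ENNReal.ofReal (2 ^ k) * W) * ENNReal.ofReal A := by
        rw [ENNReal.ofReal_mul (by positivity)]
        ring
      _ ≤ _ := by
        rw [min_eq_left hs1, one_mul]
        gcongr
        exact le_self_add

end Polar

theorem lintegral_Ioi_mul_abs_sq_sub_sq_rpow_le (r b η : ℝ) (hη : 0 < η) :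
    ∫⁻ s in Ioi (0 : ℝ), ENNReal.ofReal (s * (|r ^ 2 - s ^ 2| / 2 + η) ^ (-b)) ≤
      ENNReal.ofReal (η ^ (1 - b)) * ∫⁻ t : ℝ, ENNReal.ofReal ((1 + ‖t‖) ^ (-b)) := by
  set f : ℝ → ℝ := fun s ↦ (s ^ 2 - r ^ 2) / (2 * η) with hf
  have hderiv (s : ℝ) (_ : s ∈ Ioi (0 : ℝ)) : HasDerivWithinAt f (s / η) (Ioi 0) s := by
    have h := (((hasDerivAt_pow 2 s).sub_const (r ^ 2)).div_const (2 * η)).hasDerivWithinAt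
      (s := Ioi 0)
    exact h.congr_deriv (by push_cast; field_simp)
  have hmono : MonotoneOn f (Ioi 0) := fun x hx y _ hxy ↦ by
    have hx' : (0 : ℝ) < x := hx
    simp only [hf]
    gcongr
  have hpoint (s : ℝ) (hs : s ∈ Ioi (0 : ℝ)) :
      ENNReal.ofReal (s * (|r ^ 2 - s ^ 2| / 2 + η) ^ (-b)) = ENNReal.ofReal (η ^ (1 - b)) *
        (ENNReal.ofReal (s / η) * ENNReal.ofReal ((1 + ‖f s‖) ^ (-b))) := by
    have hs' : (0 : ℝ) < s := hs
    have hfactor : |r ^ 2 - s ^ 2| / 2 + η = η * (1 + ‖f s‖) := by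
      rw [hf, Real.norm_eq_abs, abs_div, abs_of_pos (by positivity : 0 < 2 * η), abs_sub_comm]
      field_simp
      ring
    rw [← ENNReal.ofReal_mul (by positivity), ← ENNReal.ofReal_mul (by positivity), hfactor,
      Real.mul_rpow hη.le (by positivity), Real.rpow_sub hη, Real.rpow_neg hη.le, Real.rpow_one]
    congr 1
    field_simp
  calc
    _ = ENNReal.ofReal (η ^ (1 - b)) * ∫⁻ s in Ioi (0 : ℝ),
        ENNReal.ofReal (s / η) * ENNReal.ofReal ((1 + ‖f s‖) ^ (-b)) := by
      rw [← lintegral_const_mul' _ _ ENNReal.ofReal_ne_top]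
      exact setLIntegral_congr_fun measurableSet_Ioi hpoint
    _ ≤ _ := by
      rw [← lintegral_image_eq_lintegral_deriv_mul_of_monotoneOn measurableSet_Ioi hderiv hmono
        fun t ↦ ENNReal.ofReal ((1 + ‖t‖) ^ (-b))]
      exact mul_le_mul_right (setLIntegral_le_lintegral _ _) _

theorem min_mul_weight_mul_resolvent_le {b Q r s η : ℝ} (hb1 : 1 < b) (hb2 : b ≤ 2) (hr : 0 ≤ r)
    (hs : 0 < s) (hη : 0 < η) :
    min 1 s * (1 + |s - Q|) ^ (-2 : ℝ) * (|r ^ 2 - s ^ 2| / 2 + η) ^ (-b) ≤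
      64 * ((1 + r) * (1 + |Q - r|))⁻¹ * (s * (|r ^ 2 - s ^ 2| / 2 + η) ^ (-b) +
        (1 + ‖s - Q‖) ^ (-2 : ℝ) + (1 + ‖s - r‖) ^ (-b)) := by
  simp only [Real.norm_eq_abs]
  set D := |r ^ 2 - s ^ 2| / 2 + η with hD
  set A := 1 + |s - Q| with hA
  set B := 1 + |s - r| with hB
  set M := 1 + |Q - r| with hM
  have hD0 : 0 < D := by positivity
  have hA1 : 1 ≤ A := by simp [hA]
  have hB1 : 1 ≤ B := by simp [hB]
  have hM1 : 1 ≤ M := by simp [hM]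
  have htri : |Q - r| ≤ |s - Q| + |s - r| := by
    simpa [abs_sub_comm Q s] using abs_sub_le Q s r
  have hMAB : M ≤ A + B := by linarith
  have hA2 : A ^ (-2 : ℝ) = (A ^ 2)⁻¹ := by
    rw [Real.rpow_neg (by positivity)]; norm_cast
  rw [hA2]
  have hDb : 0 < D ^ (-b) := by positivity
  have hBb : 0 < B ^ (-b) := by positivity
  rcases le_total |s - r| 1 with hnear | hfar
  · have hmin : (1 + r) * min 1 s ≤ 3 * s := by
      have h := (abs_le.1 hnear).1
      rcases le_total 1 s with h1 | h1
      · rw [min_eq_left h1]; linarith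
      · rw [min_eq_right h1]; nlinarith
    have hMA : M ≤ 2 * A ^ 2 := by nlinarith
    calc
      _ ≤ 6 * ((1 + r) * M)⁻¹ * (s * D ^ (-b)) := by
        rw [← mul_assoc]
        refine mul_le_mul_of_nonneg_right ?_ hDb.le
        rw [← div_eq_mul_inv, ← div_eq_mul_inv, div_mul_eq_mul_div,
          div_le_div_iff₀ (by positivity) (by positivity)]
        calc min 1 s * ((1 + r) * M) = ((1 + r) * min 1 s) * M := by ring
          _ ≤ (3 * s) * (2 * A ^ 2) := by gcongr
          _ = _ := by ring
      _ ≤ _ := by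
        gcongr
        · norm_num
        · have : 0 < (A ^ 2)⁻¹ := by positivity
          linarith
  · have hDge : B * (1 + r) / 8 ≤ D := by
      have hfac : |r ^ 2 - s ^ 2| = |s - r| * (s + r) := by
        rw [abs_sub_comm, sq_sub_sq, abs_mul, abs_of_pos (by positivity : 0 < s + r), mul_comm]
      have hsr : 1 ≤ s + r := hfar.trans (abs_le.2 ⟨by linarith, by linarith⟩)
      have h1 : B / 2 ≤ |s - r| := by linarith
      have h2 : (1 + r) / 2 ≤ s + r := by linarith
      have h3 : B / 2 * ((1 + r) / 2) ≤ |s - r| * (s + r) := by gcongr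
      rw [hD, hfac]
      linarith
    have hDle : D ^ (-b) ≤ 64 * (B ^ (-b) * (1 + r)⁻¹) := by
      calc D ^ (-b) ≤ (B * (1 + r) / 8) ^ (-b) :=
            Real.rpow_le_rpow_of_nonpos (by positivity) hDge (by linarith)
        _ = 8 ^ b * (B ^ (-b) * (1 + r) ^ (-b)) := by
            rw [Real.div_rpow (by positivity) (by norm_num), Real.mul_rpow (by positivity)
              (by positivity), Real.rpow_neg (x := 8) (by norm_num), div_inv_eq_mul, mul_comm]
        _ ≤ _ := by
            gcongr
            · calc (8 : ℝ) ^ b ≤ 8 ^ (2 : ℝ) := by gcongr; norm_num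
                _ = 64 := by norm_num
            · rw [← Real.rpow_neg_one]
              gcongr
              linarith
    have hBB : B * B ^ (-b) ≤ 1 := by
      rw [← Real.rpow_one_add' (by positivity) (by linarith)]
      exact Real.rpow_le_one_of_one_le_of_nonpos hB1 (by linarith)
    have hAB : (A ^ 2)⁻¹ * B ^ (-b) ≤ M⁻¹ * ((A ^ 2)⁻¹ + B ^ (-b)) := by
      have hAA : (A ^ 2)⁻¹ * A ≤ 1 := by
        rw [inv_mul_le_iff₀ (by positivity)]; nlinarith
      rw [← div_eq_inv_mul (b := M), le_div_iff₀ (by positivity)]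
      calc (A ^ 2)⁻¹ * B ^ (-b) * M ≤ (A ^ 2)⁻¹ * B ^ (-b) * (A + B) := by gcongr
        _ = (A ^ 2)⁻¹ * (B * B ^ (-b)) + ((A ^ 2)⁻¹ * A) * B ^ (-b) := by ring
        _ ≤ (A ^ 2)⁻¹ * 1 + 1 * B ^ (-b) := by gcongr
        _ = _ := by ring
    calc
      _ ≤ 1 * (A ^ 2)⁻¹ * (64 * (B ^ (-b) * (1 + r)⁻¹)) := by
        gcongr
        exact min_le_left _ _
      _ = 64 * (1 + r)⁻¹ * ((A ^ 2)⁻¹ * B ^ (-b)) := by ring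
      _ ≤ 64 * (1 + r)⁻¹ * (M⁻¹ * ((A ^ 2)⁻¹ + B ^ (-b))) := by gcongr
      _ = 64 * ((1 + r) * M)⁻¹ * ((A ^ 2)⁻¹ + B ^ (-b)) := by rw [mul_inv]; ring
      _ ≤ _ := by
        gcongr
        have : 0 < s * D ^ (-b) := by positivity
        linarith

/-- The radial integral of the weighted power of the resolvent. The part `|s - r| ≤ 1` is controlled
by the energy variable `s ^ 2 / 2`, the rest by the lower bound `|s - r| * (s + r) / 2` on the
denominator. -/
theorem exists_lintegral_Ioi_weight_mul_resolvent_le {b : ℝ} (hb1 : 1 < b) (hb2 : b ≤ 2) :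
    ∃ C : ℝ≥0∞, C ≠ ∞ ∧ ∀ Q r η : ℝ, 0 ≤ r → 0 < η → η ≤ 1 →
      ∫⁻ s in Ioi (0 : ℝ), ENNReal.ofReal
          (min 1 s * (1 + |s - Q|) ^ (-2 : ℝ) * (|r ^ 2 - s ^ 2| / 2 + η) ^ (-b)) ≤
        C * ENNReal.ofReal (η ^ (1 - b) * ((1 + r) * (1 + |Q - r|))⁻¹) := by
  set K : ℝ → ℝ≥0∞ := fun c ↦ ∫⁻ t : ℝ, ENNReal.ofReal ((1 + ‖t‖) ^ (-c)) with hK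
  have hKfin (c : ℝ) (hc : 1 < c) : K c ≠ ∞ :=
    (finite_integral_one_add_norm (by simpa using hc)).ne
  have hKb := hKfin b hb1
  have hK2 := hKfin 2 one_lt_two
  refine ⟨64 * (K b + K 2 + K b), by finiteness, fun Q r η hr hη hη1 ↦ ?_⟩
  have hηb : 1 ≤ ENNReal.ofReal (η ^ (1 - b)) := by
    rw [← ENNReal.ofReal_one]
    gcongr
    exact Real.one_le_rpow_of_pos_of_le_one_of_nonpos hη hη1 (by linarith)
  have htranslate (c x : ℝ) :
      ∫⁻ s in Ioi (0 : ℝ), ENNReal.ofReal ((1 + ‖s - x‖) ^ (-c)) ≤ K c :=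
    (setLIntegral_le_lintegral _ _).trans
      (lintegral_sub_right_eq_self (fun t : ℝ ↦ ENNReal.ofReal ((1 + ‖t‖) ^ (-c))) x).le
  set m : ℝ := ((1 + r) * (1 + |Q - r|))⁻¹ with hm
  calc
    _ ≤ ∫⁻ s in Ioi (0 : ℝ), ENNReal.ofReal (64 * m) *
        (ENNReal.ofReal (s * (|r ^ 2 - s ^ 2| / 2 + η) ^ (-b)) +
          ENNReal.ofReal ((1 + ‖s - Q‖) ^ (-2 : ℝ)) + ENNReal.ofReal ((1 + ‖s - r‖) ^ (-b))) := by
      refine setLIntegral_mono' measurableSet_Ioi fun s (hs : 0 < s) ↦ ?_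
      rw [← ENNReal.ofReal_add (by positivity) (by positivity),
        ← ENNReal.ofReal_add (by positivity) (by positivity), ← ENNReal.ofReal_mul (by positivity)]
      exact ENNReal.ofReal_le_ofReal (min_mul_weight_mul_resolvent_le hb1 hb2 hr hs hη)
    _ ≤ ENNReal.ofReal (64 * m) * (ENNReal.ofReal (η ^ (1 - b)) * K b + K 2 + K b) := by
      rw [lintegral_const_mul' _ _ ENNReal.ofReal_ne_top, lintegral_add_right _ (by fun_prop),
        lintegral_add_right _ (by fun_prop)]
      gcongr
      · exact lintegral_Ioi_mul_abs_sq_sub_sq_rpow_le r b η hη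
      · exact htranslate 2 Q
      · exact htranslate b r
    _ ≤ ENNReal.ofReal (64 * m) * (ENNReal.ofReal (η ^ (1 - b)) * K b +
        ENNReal.ofReal (η ^ (1 - b)) * K 2 + ENNReal.ofReal (η ^ (1 - b)) * K b) := by
      gcongr <;> exact le_mul_of_one_le_left' hηb
    _ = _ := by
      rw [ENNReal.ofReal_mul (by norm_num), ENNReal.ofReal_mul (by positivity),
        ENNReal.ofReal_ofNat]
      ring

theorem exists_lintegral_weight_mul_resolvent_le {E : Type*} [NormedAddCommGroup E]
    [NormedSpace ℝ E] [FiniteDimensional ℝ E] [MeasurableSpace E] [BorelSpace E] (μ : Measure E)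
    [μ.IsAddHaarMeasure] (hn : 2 < finrank ℝ E) {b : ℝ} (hb1 : 1 < b) (hb2 : b ≤ 2) :
    ∃ C : ℝ≥0∞, C ≠ ∞ ∧ ∀ q : E, ∀ r η : ℝ, 0 ≤ r → 0 < η → η ≤ 1 →
      ∫⁻ p, ENNReal.ofReal ((1 + ‖p - q‖) ^ (-(2 * finrank ℝ E : ℝ)) *
          (|r ^ 2 - ‖p‖ ^ 2| / 2 + η) ^ (-b)) ∂μ ≤
        C * ENNReal.ofReal (η ^ (1 - b) * ((1 + r) * (1 + |‖q‖ - r|))⁻¹) := by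
  have : Nontrivial E := Module.nontrivial_of_finrank_pos (R := ℝ) (by omega)
  obtain ⟨C₁, hC₁, h₁⟩ := exists_lintegral_sphere_weight_le μ hn
  obtain ⟨C₂, hC₂, h₂⟩ := exists_lintegral_Ioi_weight_mul_resolvent_le hb1 hb2
  refine ⟨C₁ * C₂, by finiteness, fun q r η hr hη hη1 ↦ ?_⟩
  rw [lintegral_eq_lintegral_Ioi_toSphere μ (by fun_prop)]
  calc
    _ ≤ ∫⁻ s in Ioi (0 : ℝ), C₁ * ENNReal.ofReal
        (min 1 s * (1 + |s - ‖q‖|) ^ (-2 : ℝ) * (|r ^ 2 - s ^ 2| / 2 + η) ^ (-b)) := by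
      refine setLIntegral_mono' measurableSet_Ioi fun s (hs : 0 < s) ↦ ?_
      have hnorm (ω : sphere (0 : E) 1) : ‖s • (ω : E)‖ = s := by
        rw [norm_smul, norm_eq_of_mem_sphere ω, mul_one, Real.norm_of_nonneg hs.le]
      have hsplit (ω : sphere (0 : E) 1) :
          ENNReal.ofReal ((1 + ‖s • (ω : E) - q‖) ^ (-(2 * finrank ℝ E : ℝ)) *
            (|r ^ 2 - ‖s • (ω : E)‖ ^ 2| / 2 + η) ^ (-b)) =
          ENNReal.ofReal ((1 + ‖s • (ω : E) - q‖) ^ (-(2 * finrank ℝ E : ℝ))) *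
            ENNReal.ofReal ((|r ^ 2 - s ^ 2| / 2 + η) ^ (-b)) := by
        rw [hnorm, ENNReal.ofReal_mul (by positivity)]
      simp_rw [hsplit]
      rw [lintegral_mul_const' _ _ ENNReal.ofReal_ne_top, ← mul_assoc,
        ENNReal.ofReal_mul (by positivity), ← mul_assoc]
      exact mul_le_mul_left (h₁ q s hs) _
    _ ≤ _ := by
      rw [lintegral_const_mul' _ _ hC₁, mul_assoc]
      gcongr
      exact h₂ ‖q‖ r η hr hη hη1

theorem inv_one_add_sq_pow_le {x : ℝ} (hx : 0 ≤ x) (d : ℕ) :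
    ((1 + x ^ 2) ^ d)⁻¹ ≤ 2 ^ d * (1 + x) ^ (-(2 * d : ℝ)) := by
  have hpow : (1 + x) ^ (-(2 * d : ℝ)) = (((1 + x) ^ 2) ^ d)⁻¹ := by
    rw [Real.rpow_neg (by positivity), ← pow_mul]
    norm_cast
  rw [hpow, ← div_eq_mul_inv, le_div_iff₀ (by positivity), inv_mul_le_iff₀ (by positivity),
    ← mul_pow]
  gcongr
  nlinarith [sq_nonneg (1 - x)]

theorem inv_norm_add_mul_I_rpow_le {α η b s : ℝ} (hη : 0 < η) (hb0 : 0 ≤ b) (hb2 : b ≤ 2) :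
    (‖((α - s ^ 2 / 2 : ℝ) : ℂ) + (η : ℂ) * Complex.I‖ ^ b)⁻¹ ≤
      4 * (|√(2 * |α|) ^ 2 - s ^ 2| / 2 + η) ^ (-b) := by
  set x : ℝ := α - s ^ 2 / 2 with hx
  set z : ℂ := (x : ℂ) + (η : ℂ) * Complex.I with hz
  have hre : |x| ≤ ‖z‖ := by simpa [hz] using Complex.abs_re_le_norm z
  have him : η ≤ ‖z‖ := by simpa [hz, abs_of_pos hη] using Complex.abs_im_le_norm z
  have habs : |√(2 * |α|) ^ 2 - s ^ 2| / 2 ≤ |x| := by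
    have h := abs_abs_sub_abs_le_abs_sub α (s ^ 2 / 2)
    rw [abs_of_nonneg (by positivity : 0 ≤ s ^ 2 / 2)] at h
    rw [Real.sq_sqrt (by positivity), show 2 * |α| - s ^ 2 = 2 * (|α| - s ^ 2 / 2) by ring,
      abs_mul, abs_two]
    linarith
  set D := |√(2 * |α|) ^ 2 - s ^ 2| / 2 + η with hD
  have hD0 : 0 < D := by positivity
  calc (‖z‖ ^ b)⁻¹ ≤ ((D / 2) ^ b)⁻¹ := by
        gcongr
        linarith
    _ = 2 ^ b * D ^ (-b) := by
        rw [Real.div_rpow hD0.le (by norm_num), inv_div, Real.rpow_neg hD0.le, div_eq_mul_inv]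
    _ ≤ _ := by
        gcongr
        calc (2 : ℝ) ^ b ≤ 2 ^ (2 : ℝ) := by gcongr; norm_num
          _ = 4 := by norm_num

theorem sqrt_rpow_mul_sqrt_le {a : ℝ} (ha0 : 0 ≤ a) (ha1 : a ≤ 1) (α Q : ℝ) :
    √(1 + α ^ 2) ^ (a / 2) * √(1 + (Q - √(2 * |α|)) ^ 2) ≤
      (1 + √(2 * |α|)) * (1 + |Q - √(2 * |α|)|) := by
  have hsqrt (x : ℝ) : √(1 + x ^ 2) ≤ 1 + |x| := by
    rw [Real.sqrt_le_left (by positivity)]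
    nlinarith [abs_nonneg x, sq_abs x]
  set r := √(2 * |α|) with hr
  have hr0 : 0 ≤ r := Real.sqrt_nonneg _
  have hr2 : r ^ 2 = 2 * |α| := Real.sq_sqrt (by positivity)
  gcongr
  · calc √(1 + α ^ 2) ^ (a / 2) ≤ ((1 + r) ^ (2 : ℝ)) ^ (a / 2) := by
          gcongr
          refine (hsqrt α).trans ?_
          rw [Real.rpow_two]
          nlinarith [abs_nonneg α]
      _ = (1 + r) ^ a := by rw [← Real.rpow_mul (by positivity)]; congr 1; ring
      _ ≤ (1 + r) ^ (1 : ℝ) := by gcongr; linarith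
      _ = 1 + r := Real.rpow_one _
  · exact hsqrt _

/-- Estimate (2.11) of the paper's Lemma 3.3: for `d ≥ 3` and `0 ≤ a < 1` there is a
constant `C_a` such that for every function `h` with finite weighted sup-norm
`‖h‖_{2d,0} := sup_x ⟨x⟩^{2d}‖h x‖` (here `N` is any such bound), every `η ∈ (0,1]`,
`α ∈ ℝ` and `q ∈ ℝ^d`, the `(2-a)`-power of the free resolvent integrates to at most
`C_a ‖h‖_{2d,0} η^{-(1-a)} / (⟨α⟩^{a/2} ⟨|q| - √(2|α|)⟩)`. -/
theorem resolvent_power_weighted_bound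
    (d : ℕ) (hd : 3 ≤ d) (a : ℝ) (ha0 : 0 ≤ a) (ha1 : a < 1) :
    ∃ C > (0 : ℝ), ∀ h : EuclideanSpace ℝ (Fin d) → ℂ, Measurable h →
      ∀ N : ℝ, (∀ x : EuclideanSpace ℝ (Fin d), (1 + ‖x‖ ^ 2) ^ d * ‖h x‖ ≤ N) →
      ∀ η : ℝ, 0 < η → η ≤ 1 → ∀ α : ℝ, ∀ q : EuclideanSpace ℝ (Fin d),
        (∫ p : EuclideanSpace ℝ (Fin d),
            ‖h (p - q)‖ /
              ‖((α - ‖p‖ ^ 2 / 2 : ℝ) : ℂ) + (η : ℂ) * Complex.I‖ ^ ((2 : ℝ) - a))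
          ≤ C * N * η ^ (-(1 - a)) /
              (Real.sqrt (1 + α ^ 2) ^ (a / 2) *
                Real.sqrt (1 + (‖q‖ - Real.sqrt (2 * |α|)) ^ 2)) := by
  have hfin : finrank ℝ (EuclideanSpace ℝ (Fin d)) = d := finrank_euclideanSpace_fin
  obtain ⟨C, hC, hbound⟩ := exists_lintegral_weight_mul_resolvent_le
    (volume : Measure (EuclideanSpace ℝ (Fin d))) (by omega) (b := 2 - a)
    (by linarith) (by linarith)
  rw [hfin] at hbound
  refine ⟨2 ^ d * 4 * (C.toReal + 1), by positivity, fun h hh N hN η hη hη1 α q ↦ ?_⟩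
  have hN0 : 0 ≤ N := le_trans (by positivity) (hN 0)
  set r := √(2 * |α|) with hr
  have hr0 : 0 ≤ r := Real.sqrt_nonneg _
  have hpoint (p : EuclideanSpace ℝ (Fin d)) :
      ‖h (p - q)‖ / ‖((α - ‖p‖ ^ 2 / 2 : ℝ) : ℂ) + (η : ℂ) * Complex.I‖ ^ (2 - a) ≤
        (2 ^ d * 4 * N) * ((1 + ‖p - q‖) ^ (-(2 * d : ℝ)) *
          (|r ^ 2 - ‖p‖ ^ 2| / 2 + η) ^ (-(2 - a))) := by
    have hdecay : ‖h (p - q)‖ ≤ N * (2 ^ d * (1 + ‖p - q‖) ^ (-(2 * d : ℝ))) := by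
      calc ‖h (p - q)‖ ≤ N * ((1 + ‖p - q‖ ^ 2) ^ d)⁻¹ := by
            rw [← div_eq_mul_inv, le_div_iff₀ (by positivity), mul_comm]
            exact hN _
        _ ≤ _ := by
            gcongr
            exact inv_one_add_sq_pow_le (norm_nonneg _) d
    calc _ ≤ (N * (2 ^ d * (1 + ‖p - q‖) ^ (-(2 * d : ℝ)))) *
          (4 * (|r ^ 2 - ‖p‖ ^ 2| / 2 + η) ^ (-(2 - a))) := by
          rw [div_eq_mul_inv]
          gcongr
          exact inv_norm_add_mul_I_rpow_le hη (by linarith) (by linarith)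
      _ = _ := by ring
  set m : ℝ := η ^ (-(1 - a)) * ((1 + r) * (1 + |‖q‖ - r|))⁻¹ with hm
  have hm0 : 0 ≤ m := by positivity
  have hlint : ∫⁻ p : EuclideanSpace ℝ (Fin d), ENNReal.ofReal (‖h (p - q)‖ /
      ‖((α - ‖p‖ ^ 2 / 2 : ℝ) : ℂ) + (η : ℂ) * Complex.I‖ ^ (2 - a)) ≤
        ENNReal.ofReal ((2 ^ d * 4 * N) * (C.toReal * m)) := by
    calc _ ≤ ∫⁻ p : EuclideanSpace ℝ (Fin d), ENNReal.ofReal (2 ^ d * 4 * N) *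
          ENNReal.ofReal ((1 + ‖p - q‖) ^ (-(2 * d : ℝ)) *
            (|r ^ 2 - ‖p‖ ^ 2| / 2 + η) ^ (-(2 - a))) := by
          refine lintegral_mono fun p ↦ ?_
          rw [← ENNReal.ofReal_mul (by positivity)]
          exact ENNReal.ofReal_le_ofReal (hpoint p)
      _ ≤ ENNReal.ofReal (2 ^ d * 4 * N) * (C * ENNReal.ofReal m) := by
          rw [lintegral_const_mul' _ _ ENNReal.ofReal_ne_top, hm,
            show -(1 - a) = 1 - (2 - a) by ring]
          gcongr
          exact hbound q r η hr0 hη hη1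
      _ = _ := by
          rw [ENNReal.ofReal_mul (p := 2 ^ d * 4 * N) (by positivity),
            ENNReal.ofReal_mul ENNReal.toReal_nonneg,
            ENNReal.ofReal_toReal hC]
  have hmeas : AEStronglyMeasurable (fun p : EuclideanSpace ℝ (Fin d) ↦ ‖h (p - q)‖ /
      ‖((α - ‖p‖ ^ 2 / 2 : ℝ) : ℂ) + (η : ℂ) * Complex.I‖ ^ (2 - a)) volume :=
    Measurable.aestronglyMeasurable (by fun_prop)
  rw [integral_eq_lintegral_of_nonneg_ae (ae_of_all _ fun p ↦ by positivity) hmeas]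
  calc _ ≤ (2 ^ d * 4 * N) * (C.toReal * m) :=
        ENNReal.toReal_le_of_le_ofReal (by positivity) hlint
    _ ≤ (2 ^ d * 4 * N) * ((C.toReal + 1) * m) := by
        gcongr
        linarith
    _ = 2 ^ d * 4 * (C.toReal + 1) * N * η ^ (-(1 - a)) / ((1 + r) * (1 + |‖q‖ - r|)) := by
        rw [hm, div_eq_mul_inv]
        ring
    _ ≤ _ := by
        refine div_le_div_of_nonneg_left (by positivity) (by positivity) ?_
        exact sqrt_rpow_mul_sqrt_le ha0 ha1.le α ‖q‖
end

section
/- For an integer n ≥ 2, let c(n) := ∑_{Γ} (−1)^{|Γ|}, where the sum runs over all sets Γ of edges of the complete graph K_n on vertex set {1,…,n} such that the spanning subgraph ({1,…,n}, Γ) is connected, and |Γ| denotes the number of edges of Γ. Then |c(n)| ≤ n^{n−2}. -/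
/-- The Ursell coefficient `c(n)`: the sum of `(-1)^{|Γ|}` over all edge sets `Γ` of the
complete graph on `{1,…,n}` (sets of non-diagonal unordered pairs) such that the spanning
subgraph with edge set `Γ` is connected. -/
noncomputable def ursell (n : ℕ) : ℤ := by
  classical
  exact ∑ Γ ∈ (Finset.univ : Finset (Finset (Sym2 (Fin n)))).filter
      (fun Γ : Finset (Sym2 (Fin n)) => (∀ e ∈ Γ, ¬e.IsDiag) ∧
        (SimpleGraph.fromEdgeSet (↑Γ : Set (Sym2 (Fin n)))).Connected),
    (-1 : ℤ) ^ Γ.card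

open Finset

/-- Two graphs with the same adjacencies at every vertex of the component of `r` in the first one
have the same component of `r`. -/
lemma SimpleGraph.reachable_iff_of_adj_iff {V : Type*} {G H : SimpleGraph V} {r : V}
    (h : ∀ x y, G.Reachable r x → (G.Adj x y ↔ H.Adj x y)) (x : V) :
    G.Reachable r x ↔ H.Reachable r x := by
  simp only [SimpleGraph.reachable_iff_reflTransGen] at h ⊢
  constructor
  · intro hx
    induction hx with
    | refl => exact .refl
    | tail hb hbc ih => exact ih.tail ((h _ _ hb).1 hbc)
  · intro hx
    induction hx with
    | refl => exact .refl
    | tail _ hbc ih => exact ih.tail ((h _ _ ih).2 hbc)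

namespace Ursell

open scoped Classical in
/-- The edges of the complete graph on `S`. -/
noncomputable def edges {V : Type*} (S : Finset V) : Finset (Sym2 V) :=
  S.sym2.filter (fun e => ¬e.IsDiag)

open scoped Classical in
/-- The vertices reachable from `r` in the graph with edge set `Γ`. -/
noncomputable def component {V : Type*} [Fintype V] (r : V) (Γ : Finset (Sym2 V)) : Finset V :=
  univ.filter (fun x => (SimpleGraph.fromEdgeSet (Γ : Set (Sym2 V))).Reachable r x)

open scoped Classical in
/-- The signed count of the graphs on `S` in which the component of `r` is `T`. -/
noncomputable def signedCount {V : Type*} [Fintype V] (r : V) (S T : Finset V) : ℤ :=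
  ∑ Γ ∈ (edges S).powerset.filter (fun Γ => component r Γ = T), (-1 : ℤ) ^ #Γ

variable {V : Type*}

lemma mk_mem_edges {S : Finset V} {x y : V} : s(x, y) ∈ edges S ↔ x ∈ S ∧ y ∈ S ∧ x ≠ y := by
  simp [edges, and_assoc]

lemma edges_mono {S T : Finset V} (h : S ⊆ T) : edges S ⊆ edges T := by
  intro e
  induction e with
  | _ x y =>
    simp only [mk_mem_edges]
    exact fun ⟨hx, hy, hxy⟩ => ⟨h hx, h hy, hxy⟩

variable [Fintype V] {r : V}

lemma mem_component {Γ : Finset (Sym2 V)} {x : V} :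
    x ∈ component r Γ ↔ (SimpleGraph.fromEdgeSet (Γ : Set (Sym2 V))).Reachable r x := by
  simp [component]

lemma root_mem_component (Γ : Finset (Sym2 V)) : r ∈ component r Γ :=
  mem_component.2 (.refl _)

lemma mem_component_of_mk_mem {Γ : Finset (Sym2 V)} {x y : V} (hx : x ∈ component r Γ)
    (hxy : s(x, y) ∈ Γ) : y ∈ component r Γ := by
  by_cases hne : x = y
  · exact hne ▸ hx
  · rw [mem_component] at hx ⊢
    exact hx.trans (SimpleGraph.Adj.reachable (by simp [hxy, hne]))

lemma component_subset {S : Finset V} (hr : r ∈ S) {Γ : Finset (Sym2 V)} (hΓ : Γ ⊆ edges S) :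
    component r Γ ⊆ S := by
  intro x hx
  rw [mem_component, SimpleGraph.reachable_iff_reflTransGen] at hx
  induction hx with
  | refl => exact hr
  | tail _ hbc _ =>
    simp only [SimpleGraph.fromEdgeSet_adj, mem_coe] at hbc
    exact (mk_mem_edges.1 (hΓ hbc.1)).2.1

lemma component_congr {Γ Δ : Finset (Sym2 V)}
    (h : ∀ x y, x ∈ component r Γ → (s(x, y) ∈ Γ ↔ s(x, y) ∈ Δ)) :
    component r Γ = component r Δ := by
  ext x
  simp only [mem_component] at h ⊢
  refine SimpleGraph.reachable_iff_of_adj_iff (fun x y hx => ?_) x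
  simp [h x y hx]

open scoped Classical in
lemma component_symmDiff_singleton {Γ : Finset (Sym2 V)} {u v : V}
    (hu : u ∉ component r Γ) (hv : v ∉ component r Γ) :
    component r (symmDiff Γ {s(u, v)}) = component r Γ := by
  refine (component_congr fun x y hx => ?_).symm
  have hne : s(x, y) ≠ s(u, v) := by
    intro h
    rcases Sym2.eq_iff.1 h with ⟨rfl, _⟩ | ⟨rfl, _⟩
    · exact hu hx
    · exact hv hx
  simp [mem_symmDiff, hne]

/-- Toggling an edge disjoint from `T` cancels the signed count. -/
lemma signedCount_eq_zero {S T : Finset V} {u v : V} (hu : u ∈ S) (hv : v ∈ S) (huv : u ≠ v)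
    (huT : u ∉ T) (hvT : v ∉ T) : signedCount r S T = 0 := by
  classical
  unfold signedCount
  refine sum_involution (fun Γ _ => symmDiff Γ {s(u, v)}) ?_ ?_ ?_ ?_
  · intro Γ _
    by_cases he : s(u, v) ∈ Γ
    · have h : symmDiff Γ {s(u, v)} = Γ.erase s(u, v) := by
        ext e; by_cases h : e = s(u, v) <;> simp [mem_symmDiff, h, he]
      rw [h, ← card_erase_add_one he, pow_succ]
      ring
    · have h : symmDiff Γ {s(u, v)} = insert s(u, v) Γ := by
        ext e; by_cases h : e = s(u, v) <;> simp [mem_symmDiff, h, he]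
      rw [h, card_insert_of_notMem he, pow_succ]
      ring
  · intro Γ _ _ h
    simp at h
  · intro Γ hΓ
    obtain ⟨hsub, rfl⟩ := mem_filter.1 hΓ
    refine mem_filter.2 ⟨mem_powerset.2 ?_, component_symmDiff_singleton huT hvT⟩
    intro e he
    rcases mem_symmDiff.1 he with ⟨he, _⟩ | ⟨he, _⟩
    · exact mem_powerset.1 hsub he
    · rw [mem_singleton.1 he]
      exact mk_mem_edges.2 ⟨hu, hv, huv⟩
  · intro Γ _
    simp

lemma signedCount_eq_zero_of_root_notMem {S T : Finset V} (hT : r ∉ T) :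
    signedCount r S T = 0 := by
  classical
  refine sum_eq_zero fun Γ hΓ => absurd ?_ hT
  rw [← (mem_filter.1 hΓ).2]
  exact root_mem_component Γ

open scoped Classical in
/-- A graph on `S` in which the component of `r` is `S \ {v}` has no edge at `v`. -/
lemma signedCount_erase {S : Finset V} {v : V} :
    signedCount r S (S.erase v) = signedCount r (S.erase v) (S.erase v) := by
  unfold signedCount
  refine sum_congr (Finset.ext fun Γ => ?_) fun _ _ => rfl
  simp only [mem_filter, mem_powerset, and_congr_left_iff]
  refine fun hΓ => ⟨fun h e he => ?_, fun h => h.trans (edges_mono (erase_subset _ _))⟩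
  induction e with
  | _ x y =>
    obtain ⟨hx, hy, hxy⟩ := mk_mem_edges.1 (h he)
    have hv : v ∉ component r Γ := by simp [hΓ]
    refine mk_mem_edges.2 ⟨mem_erase.2 ⟨?_, hx⟩, mem_erase.2 ⟨?_, hy⟩, hxy⟩
    · rintro rfl
      refine hv (mem_component_of_mk_mem (x := y) ?_ (Sym2.eq_swap ▸ he))
      simp [hΓ, hy, hxy.symm]
    · rintro rfl
      refine hv (mem_component_of_mk_mem (x := x) ?_ he)
      simp [hΓ, hx, hxy]

lemma sum_signedCount {S : Finset V} (hr : r ∈ S) (hS : S.Nontrivial) :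
    ∑ T ∈ S.powerset, signedCount r S T = 0 := by
  classical
  unfold signedCount
  rw [sum_fiberwise_of_maps_to
    fun Γ hΓ => mem_powerset.2 (component_subset hr (mem_powerset.1 hΓ))]
  refine sum_powerset_neg_one_pow_card_of_nonempty ?_
  obtain ⟨x, hx, y, hy, hxy⟩ := hS
  exact ⟨s(x, y), mk_mem_edges.2 ⟨hx, hy, hxy⟩⟩

open scoped Classical in
/-- The recursion for the signed count of connected graphs. -/
lemma signedCount_self {S : Finset V} (hr : r ∈ S) (hS : S.Nontrivial) :
    signedCount r S S = -∑ v ∈ S.erase r, signedCount r (S.erase v) (S.erase v) := by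
  have hsub : insert S ((S.erase r).image S.erase) ⊆ S.powerset := by
    intro T hT
    rcases mem_insert.1 hT with rfl | hT
    · exact mem_powerset_self _
    · obtain ⟨v, _, rfl⟩ := mem_image.1 hT
      exact mem_powerset.2 (erase_subset _ _)
  have hsum := sum_signedCount hr hS
  rw [← sum_subset hsub, sum_insert, sum_image] at hsum
  · simp only [signedCount_erase] at hsum
    linarith
  · exact (erase_injOn S).mono (by simp)
  · simp only [mem_image, not_exists, not_and]
    intro v hv h
    exact erase_ne_self.2 (mem_of_mem_erase hv) h
  · intro T hT hT'
    by_cases hrT : r ∈ T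
    · have hTS := mem_powerset.1 hT
      simp only [mem_insert, mem_image, not_or, not_exists, not_and] at hT'
      obtain ⟨u, hu, huT⟩ := exists_of_ssubset (hTS.ssubset_of_ne hT'.1)
      have hTu : T ⊆ S.erase u := subset_erase.2 ⟨hTS, huT⟩
      have hur : u ≠ r := fun h => huT (h ▸ hrT)
      obtain ⟨v, hv, hvT⟩ := exists_of_ssubset
        (hTu.ssubset_of_ne (Ne.symm (hT'.2 u (mem_erase.2 ⟨hur, hu⟩))))
      obtain ⟨hvu, hv⟩ := mem_erase.1 hv
      exact signedCount_eq_zero hu hv hvu.symm huT hvT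
    · exact signedCount_eq_zero_of_root_notMem hrT

lemma signedCount_singleton : signedCount r {r} {r} = 1 := by
  classical
  have hE : edges ({r} : Finset V) = ∅ := by
    refine eq_empty_of_forall_notMem fun e => ?_
    induction e with
    | _ x y =>
      rw [mk_mem_edges, mem_singleton, mem_singleton]
      exact fun ⟨hx, hy, hxy⟩ => hxy (hx.trans hy.symm)
  have hc : component r (∅ : Finset (Sym2 V)) = {r} :=
    (component_subset (mem_singleton_self r) (empty_subset _)).antisymm
      (singleton_subset_iff.2 (root_mem_component _))
  simp [signedCount, hE, filter_singleton, hc]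

/-- The signed count of connected graphs on `k + 1` vertices is `(-1)^k k!`. -/
theorem signedCount_self_eq (k : ℕ) {S : Finset V} (hr : r ∈ S) (hS : #S = k + 1) :
    signedCount r S S = (-1) ^ k * (k.factorial : ℤ) := by
  classical
  induction k generalizing S with
  | zero =>
    obtain ⟨a, rfl⟩ := card_eq_one.1 hS
    obtain rfl := mem_singleton.1 hr
    simp [signedCount_singleton]
  | succ k ih =>
    rw [signedCount_self hr (one_lt_card_iff_nontrivial.1 (by lia)),
      sum_congr rfl fun v hv => ih (S := S.erase v)
        (mem_erase.2 ⟨(mem_erase.1 hv).1.symm, hr⟩)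
        (by rw [card_erase_of_mem (mem_of_mem_erase hv), hS]; rfl),
      sum_const, card_erase_of_mem hr, hS, Nat.factorial_succ]
    simp only [nsmul_eq_mul, Nat.add_sub_cancel]
    push_cast
    ring

end Ursell

lemma ursell_eq_signedCount {n : ℕ} (r : Fin n) : ursell n = Ursell.signedCount r univ univ := by
  classical
  unfold ursell Ursell.signedCount
  refine sum_congr (Finset.ext fun Γ => ?_) fun _ _ => rfl
  simp only [mem_filter, mem_univ, true_and, mem_powerset]
  refine and_congr ?_ ?_
  · simp [Finset.subset_iff, Ursell.edges]
  · rw [eq_univ_iff_forall, SimpleGraph.connected_iff_exists_forall_reachable]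
    simp only [Ursell.mem_component]
    exact ⟨fun ⟨v, hv⟩ x => (hv r).symm.trans (hv x), fun h => ⟨r, h⟩⟩

/-- The Ursell coefficients in closed form. -/
theorem ursell_succ (k : ℕ) : ursell (k + 1) = (-1) ^ k * (k.factorial : ℤ) := by
  rw [ursell_eq_signedCount 0, Ursell.signedCount_self_eq k (mem_univ _) (by simp)]

/-- Estimate (5.8) of the paper: the Ursell coefficients of the connected-graph expansion
satisfy `|c(n)| ≤ n^{n-2}` for `n ≥ 2`. -/
theorem ursell_bound (n : ℕ) (hn : 2 ≤ n) : |ursell n| ≤ (n : ℤ) ^ (n - 2) := by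
  obtain ⟨m, rfl⟩ := Nat.exists_eq_add_of_le' hn
  rw [ursell_succ, abs_mul, abs_pow, abs_neg, abs_one, one_pow, one_mul, Nat.abs_cast]
  have h : (m + 1).factorial ≤ (m + 2) ^ m := by
    induction m with
    | zero => simp
    | succ m ih =>
      calc (m + 2).factorial = (m + 2) * (m + 1).factorial := Nat.factorial_succ _
        _ ≤ (m + 2) * (m + 2) ^ m := Nat.mul_le_mul_left _ (ih (by lia))
        _ = (m + 2) ^ (m + 1) := (pow_succ' _ _).symm
        _ ≤ (m + 1 + 2) ^ (m + 1) := Nat.pow_le_pow_left (by lia) _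
  exact_mod_cast h
end

section
/- Let k ≥ 1 and let σ be a permutation of {1,…,k}. Then the matrix M(σ) is invertible, and its inverse is M(σ^{−1}). -/
/-- The extension `σ̃` of a permutation `σ` of `{1,…,k}` to `{0,1,…,k+1}`, with
`σ̃(0) = 0` and `σ̃(k+1) = k+1`.  Here `σ : Equiv.Perm (Fin k)` acts on `{0,…,k-1}`,
shifted by one. -/
def sigmaTilde (k : ℕ) (σ : Equiv.Perm (Fin k)) (j : ℕ) : ℕ :=
  if h : 1 ≤ j ∧ j ≤ k then ((σ ⟨j - 1, by omega⟩ : Fin k) : ℕ) + 1 else j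

/-- The `(k+1) × (k+1)` matrix `M(σ)` of the paper, with rows and columns indexed by
`{1,…,k+1}` (here coded by `Fin (k+1)` shifted by one):
`M(σ)_{ij} = 1` if `σ̃(j-1) < i ≤ σ̃(j)`, `M(σ)_{ij} = -1` if `σ̃(j) < i ≤ σ̃(j-1)`,
and `M(σ)_{ij} = 0` otherwise. -/
def Mmat (k : ℕ) (σ : Equiv.Perm (Fin k)) : Matrix (Fin (k + 1)) (Fin (k + 1)) ℤ :=
  Matrix.of fun i j =>
    if sigmaTilde k σ (j : ℕ) < (i : ℕ) + 1 ∧ (i : ℕ) + 1 ≤ sigmaTilde k σ ((j : ℕ) + 1) then 1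
    else if sigmaTilde k σ ((j : ℕ) + 1) < (i : ℕ) + 1 ∧ (i : ℕ) + 1 ≤ sigmaTilde k σ (j : ℕ)
      then -1
    else 0

theorem sigmaTilde_zero (k : ℕ) (σ : Equiv.Perm (Fin k)) : sigmaTilde k σ 0 = 0 := by
  simp [sigmaTilde]

theorem sigmaTilde_le (k : ℕ) (σ : Equiv.Perm (Fin k)) {m : ℕ} (hm : m ≤ k + 1) :
    sigmaTilde k σ m ≤ k + 1 := by
  unfold sigmaTilde
  split_ifs <;> omega

theorem sigmaTilde_sigmaTilde_inv (k : ℕ) (σ : Equiv.Perm (Fin k)) (m : ℕ) :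
    sigmaTilde k σ (sigmaTilde k σ⁻¹ m) = m := by
  by_cases h : 1 ≤ m ∧ m ≤ k
  · have hlt := (σ⁻¹ ⟨m - 1, by omega⟩).isLt
    have hinv : sigmaTilde k σ⁻¹ m = (σ⁻¹ ⟨m - 1, by omega⟩ : Fin k) + 1 := dif_pos h
    rw [hinv, sigmaTilde, dif_pos ⟨by omega, by omega⟩]
    simp only [Nat.add_sub_cancel, Fin.eta, Equiv.Perm.inv_def, Equiv.apply_symm_apply]
    omega
  · simp [sigmaTilde, h]

/-- Each entry of `M(σ)` is a difference of two values of the step function `m ↦ [i < m]`. -/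
theorem Mmat_apply (k : ℕ) (σ : Equiv.Perm (Fin k)) (i j : Fin (k + 1)) :
    Mmat k σ i j = (if (i : ℕ) < sigmaTilde k σ (j + 1) then 1 else 0) -
      (if (i : ℕ) < sigmaTilde k σ j then 1 else 0) := by
  simp only [Mmat, Matrix.of_apply]
  split_ifs <;> omega

/-- The sum of the first `m` columns of `M(σ)` telescopes. -/
theorem sum_Mmat_mul_ite_lt (k : ℕ) (σ : Equiv.Perm (Fin k)) (i : Fin (k + 1)) {m : ℕ}
    (hm : m ≤ k + 1) :
    ∑ j : Fin (k + 1), Mmat k σ i j * (if (j : ℕ) < m then 1 else 0) =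
      if (i : ℕ) < sigmaTilde k σ m then 1 else 0 := by
  let f : ℕ → ℤ := fun n => if (i : ℕ) < sigmaTilde k σ n then 1 else 0
  have hf : ∀ j : Fin (k + 1), Mmat k σ i j = f (j + 1) - f j := Mmat_apply k σ i
  have hfilter : (Finset.range (k + 1)).filter (· < m) = Finset.range m := by
    ext n
    simp only [Finset.mem_filter, Finset.mem_range]
    omega
  calc ∑ j : Fin (k + 1), Mmat k σ i j * (if (j : ℕ) < m then 1 else 0)
      = ∑ n ∈ Finset.range (k + 1), if n < m then f (n + 1) - f n else 0 := by
        simp only [hf, mul_ite, mul_one, mul_zero]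
        exact Fin.sum_univ_eq_sum_range (fun n => if n < m then f (n + 1) - f n else 0) (k + 1)
    _ = f m - f 0 := by rw [← Finset.sum_filter, hfilter, Finset.sum_range_sub]
    _ = f m := by simp [f, sigmaTilde_zero]

theorem Mmat_mul_Mmat_inv (k : ℕ) (σ : Equiv.Perm (Fin k)) : Mmat k σ * Mmat k σ⁻¹ = 1 := by
  ext i l
  rw [Matrix.mul_apply]
  simp only [Mmat_apply k σ⁻¹, mul_sub, Finset.sum_sub_distrib]
  rw [sum_Mmat_mul_ite_lt k σ i (sigmaTilde_le k σ⁻¹ (by omega)),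
    sum_Mmat_mul_ite_lt k σ i (sigmaTilde_le k σ⁻¹ (by omega)),
    sigmaTilde_sigmaTilde_inv, sigmaTilde_sigmaTilde_inv, Matrix.one_apply]
  simp only [Fin.ext_iff]
  split_ifs <;> omega

/-- Part (i) of the paper's Proposition 6.3: for every permutation `σ` of `{1,…,k}`,
the matrix `M(σ)` is invertible and its inverse is `M(σ⁻¹)`. -/
theorem Mmat_invertible_with_inverse
    (k : ℕ) (hk : 1 ≤ k) (σ : Equiv.Perm (Fin k)) :
    Mmat k σ * Mmat k σ⁻¹ = 1 ∧ Mmat k σ⁻¹ * Mmat k σ = 1 := by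
  exact ⟨Mmat_mul_Mmat_inv k σ, by simpa using Mmat_mul_Mmat_inv k σ⁻¹⟩
end

section
/- For every k ≥ 1 and every integer ℓ with 0 ≤ ℓ ≤ k, the number of permutations σ of {1,…,k} with ℓ(σ) = ℓ is at most 2·(2k)^{k−ℓ}. -/
/-- The point `(j, σ(j))` is a *peak*: `σ(j) < min {σ̃(j-1), σ̃(j+1)}`. -/
def IsPeakAt (k : ℕ) (σ : Equiv.Perm (Fin k)) (j : ℕ) : Prop :=
  sigmaTilde k σ j < min (sigmaTilde k σ (j - 1)) (sigmaTilde k σ (j + 1))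

/-- The point `(j, σ(j))` is a *valley*: `σ(j) > max {σ̃(j-1), σ̃(j+1)}`. -/
def IsValleyAt (k : ℕ) (σ : Equiv.Perm (Fin k)) (j : ℕ) : Prop :=
  max (sigmaTilde k σ (j - 1)) (sigmaTilde k σ (j + 1)) < sigmaTilde k σ j

/-- The point `(j, σ(j))` is a *ladder*: `σ(j) - 1 ∈ {σ̃(j-1), σ̃(j+1)}` and the point is
not a valley. -/
def IsLadderAt (k : ℕ) (σ : Equiv.Perm (Fin k)) (j : ℕ) : Prop :=
  (sigmaTilde k σ j - 1 = sigmaTilde k σ (j - 1) ∨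
    sigmaTilde k σ j - 1 = sigmaTilde k σ (j + 1)) ∧ ¬IsValleyAt k σ j

instance (k : ℕ) (σ : Equiv.Perm (Fin k)) (j : ℕ) : Decidable (IsPeakAt k σ j) := by
  unfold IsPeakAt; infer_instance

instance (k : ℕ) (σ : Equiv.Perm (Fin k)) (j : ℕ) : Decidable (IsValleyAt k σ j) := by
  unfold IsValleyAt; infer_instance

instance (k : ℕ) (σ : Equiv.Perm (Fin k)) (j : ℕ) : Decidable (IsLadderAt k σ j) := by
  unfold IsLadderAt; infer_instance

/-- `ℓ(σ)`: the number of `j ∈ {1,…,k}` such that `(j, σ(j))` is a ladder. -/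
def ladderCount (k : ℕ) (σ : Equiv.Perm (Fin k)) : ℕ :=
  ((Finset.Icc 1 k).filter fun j => IsLadderAt k σ j).card

/-- The degree of a permutation: `deg(σ) := k - ℓ(σ)`. -/
def permDegree (k : ℕ) (σ : Equiv.Perm (Fin k)) : ℕ := k - ladderCount k σ

theorem sigmaTilde_val_add_one (k : ℕ) (σ : Equiv.Perm (Fin k)) (i : Fin k) :
    sigmaTilde k σ (i + 1) = σ i + 1 := by
  have hi : (i : ℕ) + 1 ≤ k := i.isLt
  simp [sigmaTilde, hi]

theorem sigmaTilde_of_lt (k : ℕ) (σ : Equiv.Perm (Fin k)) {j : ℕ} (hj : k < j) :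
    sigmaTilde k σ j = j := by
  have hout : ¬ (1 ≤ j ∧ j ≤ k) := by omega
  simp [sigmaTilde, hout]

/-- The extension of `σ⁻¹` is the inverse of the extension of `σ`. -/
theorem sigmaTilde_symm_sigmaTilde (k : ℕ) (σ : Equiv.Perm (Fin k)) (j : ℕ) :
    sigmaTilde k σ.symm (sigmaTilde k σ j) = j := by
  rcases Nat.eq_zero_or_pos j with rfl | hj
  · simp [sigmaTilde_zero]
  by_cases hjk : j ≤ k
  · obtain ⟨i, rfl⟩ : ∃ i : Fin k, (i : ℕ) + 1 = j :=
      ⟨⟨j - 1, by omega⟩, Nat.sub_add_cancel hj⟩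
    rw [sigmaTilde_val_add_one, sigmaTilde_val_add_one, Equiv.symm_apply_apply]
  · have hkj : k < j := by omega
    rw [sigmaTilde_of_lt k σ hkj, sigmaTilde_of_lt k _ hkj]

theorem sigmaTilde_injective (k : ℕ) (σ : Equiv.Perm (Fin k)) :
    Function.Injective (sigmaTilde k σ) :=
  Function.LeftInverse.injective (sigmaTilde_symm_sigmaTilde k σ)

/-- If position `j` is a ladder, then the value `σ̃(j) - 1` sits at a position adjacent to `j`. -/
theorem IsLadderAt.symm_adjacent {k : ℕ} {σ : Equiv.Perm (Fin k)} {j : ℕ} (hj : 1 ≤ j)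
    (h : IsLadderAt k σ j) :
    j = sigmaTilde k σ.symm (sigmaTilde k σ j - 1) + 1 ∨
      j + 1 = sigmaTilde k σ.symm (sigmaTilde k σ j - 1) := by
  rcases h.1 with h | h <;> rw [h, sigmaTilde_symm_sigmaTilde] <;> omega

/-- Let `p` and `q` be injective with `p 0 = q 0 = 0`, moving by one at every step into a point
outside `S`. If they agree on the relative order of the points of `S` and on the direction of the
step out of each point of `S`, then they induce the same order on `{0,…,k}`. -/
theorem lt_iff_lt_of_adjacent_off {k : ℕ} {p q : ℕ → ℕ} {S : ℕ → Prop}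
    (hp : Function.Injective p) (hq : Function.Injective q) (hp0 : p 0 = 0) (hq0 : q 0 = 0)
    (hpS : ∀ v, 1 ≤ v → v ≤ k → ¬ S v → p v = p (v - 1) + 1 ∨ p v + 1 = p (v - 1))
    (hqS : ∀ v, 1 ≤ v → v ≤ k → ¬ S v → q v = q (v - 1) + 1 ∨ q v + 1 = q (v - 1))
    (hS : ∀ v w, 1 ≤ v → v ≤ k → 1 ≤ w → w ≤ k → S v → S w → (p v < p w ↔ q v < q w))
    (hstep : ∀ v, 1 ≤ v → v ≤ k → S v → (p v < p (v + 1) ↔ q v < q (v + 1))) :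
    ∀ n a b, a + b = n → a < b → b ≤ k → (p a < p b ↔ q a < q b) := by
  intro n
  induction n using Nat.strong_induction_on with
  | _ n ih =>
    intro a b hn hab hb
    rcases Nat.eq_zero_or_pos a with rfl | ha
    · have h1 := hp.ne hab.ne
      have h2 := hq.ne hab.ne
      omega
    have hpab := hp.ne hab.ne
    have hqab := hq.ne hab.ne
    by_cases hSb : S b
    · by_cases hSa : S a
      · exact hS a b ha (by omega) (by omega) hb hSa hSb
      · have h1 := hpS a ha (by omega) hSa
        have h2 := hqS a ha (by omega) hSa
        have h3 := ih (a - 1 + b) (by omega) (a - 1) b rfl (by omega) hb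
        have h4 := hp.ne (show a - 1 ≠ b by omega)
        have h5 := hq.ne (show a - 1 ≠ b by omega)
        omega
    · have h1 := hpS b (by omega) hb hSb
      have h2 := hqS b (by omega) hb hSb
      by_cases hab' : a = b - 1
      · obtain rfl : b = a + 1 := by omega
        by_cases hSa : S a
        · exact hstep a ha (by omega) hSa
        · have h3 := hpS a ha (by omega) hSa
          have h4 := hqS a ha (by omega) hSa
          have h5 := ih (a - 1 + a) (by omega) (a - 1) a rfl (by omega) (by omega)
          have h6 := hp.ne (show a - 1 ≠ a + 1 by omega)
          have h7 := hq.ne (show a - 1 ≠ a + 1 by omega)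
          rw [Nat.add_sub_cancel] at h1 h2
          omega
      · have h3 := ih (a + (b - 1)) (by omega) a (b - 1) rfl (by omega) (by omega)
        have h4 := hp.ne hab'
        have h5 := hq.ne hab'
        omega

/-- The positions, shifted to `Fin k`, at which `σ` has no ladder. -/
def nonladders (k : ℕ) (σ : Equiv.Perm (Fin k)) : Finset (Fin k) :=
  Finset.univ.filter fun i => ¬ IsLadderAt k σ (i + 1)

theorem card_nonladders (k : ℕ) (σ : Equiv.Perm (Fin k)) :
    (nonladders k σ).card = k - ladderCount k σ := by
  have hcard : ladderCount k σ =
      (Finset.univ.filter fun i : Fin k => IsLadderAt k σ (i + 1)).card := by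
    symm
    refine Finset.card_bij (fun i _ => (i : ℕ) + 1) ?_ ?_ ?_
    · intro i hi
      have := i.isLt
      simp only [Finset.mem_filter, Finset.mem_univ, true_and] at hi
      simp only [Finset.mem_filter, Finset.mem_Icc]
      exact ⟨by omega, hi⟩
    · intro i _ j _ hij
      exact Fin.ext (by simpa using hij)
    · intro j hj
      simp only [Finset.mem_filter, Finset.mem_Icc] at hj
      refine ⟨⟨j - 1, by omega⟩, ?_, by simp; omega⟩
      simpa [Nat.sub_add_cancel hj.1.1] using hj.2
  have hsum := Finset.card_filter_add_card_filter_not (s := (Finset.univ : Finset (Fin k)))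
    (fun i => IsLadderAt k σ (i + 1))
  rw [Finset.card_univ, Fintype.card_fin] at hsum
  rw [hcard, nonladders]
  omega

/-- The values of `σ` at its non-ladder positions, listed by position, each together with the
direction in which the next larger value is found. -/
def ladderCode {k d : ℕ} (σ : Equiv.Perm (Fin k)) (h : (nonladders k σ).card = d) (i : Fin d) :
    Fin k × Bool :=
  let v := σ ((nonladders k σ).orderEmbOfFin h i)
  (v, decide (sigmaTilde k σ.symm (v + 1) < sigmaTilde k σ.symm (v + 1 + 1)))

theorem exists_orderEmbOfFin_eq {k d : ℕ} {σ : Equiv.Perm (Fin k)}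
    (h : (nonladders k σ).card = d) {v : Fin k} (hv : σ.symm v ∈ nonladders k σ) :
    ∃ i, (nonladders k σ).orderEmbOfFin h i = σ.symm v := by
  have hmem : σ.symm v ∈ Set.range ((nonladders k σ).orderEmbOfFin h) := by
    rw [Finset.range_orderEmbOfFin]
    exact hv
  exact hmem

theorem symm_adjacent_of_notMem_nonladders {k : ℕ} {σ : Equiv.Perm (Fin k)} {v : Fin k}
    (hv : σ.symm v ∉ nonladders k σ) :
    sigmaTilde k σ.symm (v + 1) = sigmaTilde k σ.symm v + 1 ∨
      sigmaTilde k σ.symm (v + 1) + 1 = sigmaTilde k σ.symm v := by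
  have hladder : IsLadderAt k σ (σ.symm v + 1) := by simpa [nonladders] using hv
  have hadj := hladder.symm_adjacent (by omega)
  rw [sigmaTilde_val_add_one, Equiv.apply_symm_apply, Nat.add_sub_cancel] at hadj
  rwa [sigmaTilde_val_add_one]

theorem eq_of_ladderCode_eq {k d : ℕ} {σ τ : Equiv.Perm (Fin k)}
    (hσ : (nonladders k σ).card = d) (hτ : (nonladders k τ).card = d)
    (h : ladderCode σ hσ = ladderCode τ hτ) : σ = τ := by
  have hval (i : Fin d) : σ ((nonladders k σ).orderEmbOfFin hσ i) =
      τ ((nonladders k τ).orderEmbOfFin hτ i) := congrArg Prod.fst (congrFun h i)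
  have hcorr (v : Fin k) (i : Fin d) :
      (nonladders k σ).orderEmbOfFin hσ i = σ.symm v ↔
        (nonladders k τ).orderEmbOfFin hτ i = τ.symm v := by
    rw [Equiv.eq_symm_apply, Equiv.eq_symm_apply, hval]
  have hmem (v : Fin k) : σ.symm v ∈ nonladders k σ ↔ τ.symm v ∈ nonladders k τ := by
    constructor
    · intro hv
      obtain ⟨i, hi⟩ := exists_orderEmbOfFin_eq hσ hv
      rw [← (hcorr v i).1 hi]
      exact Finset.orderEmbOfFin_mem _ _ _
    · intro hv
      obtain ⟨i, hi⟩ := exists_orderEmbOfFin_eq hτ hv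
      rw [← (hcorr v i).2 hi]
      exact Finset.orderEmbOfFin_mem _ _ _
  have hfin {v : ℕ} (h1 : 1 ≤ v) (h2 : v ≤ k) : ∃ x : Fin k, (x : ℕ) + 1 = v :=
    ⟨⟨v - 1, by omega⟩, Nat.sub_add_cancel h1⟩
  have key := lt_iff_lt_of_adjacent_off (k := k)
    (p := sigmaTilde k σ.symm) (q := sigmaTilde k τ.symm)
    (S := fun v => ∃ x : Fin k, (x : ℕ) + 1 = v ∧ σ.symm x ∈ nonladders k σ)
    (sigmaTilde_injective k _) (sigmaTilde_injective k _)
    (sigmaTilde_zero k _) (sigmaTilde_zero k _)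
    (by
      intro v h1 h2 hv
      obtain ⟨x, rfl⟩ := hfin h1 h2
      exact symm_adjacent_of_notMem_nonladders fun hx => hv ⟨x, rfl, hx⟩)
    (by
      intro v h1 h2 hv
      obtain ⟨x, rfl⟩ := hfin h1 h2
      exact symm_adjacent_of_notMem_nonladders fun hx => hv ⟨x, rfl, (hmem x).2 hx⟩)
    (by
      rintro _ _ - - - - ⟨x, rfl, hx⟩ ⟨y, rfl, hy⟩
      obtain ⟨i, hi⟩ := exists_orderEmbOfFin_eq hσ hx
      obtain ⟨j, hj⟩ := exists_orderEmbOfFin_eq hσ hy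
      simp only [sigmaTilde_val_add_one, Nat.add_lt_add_iff_right, Fin.val_fin_lt]
      rw [← hi, ← hj, ← (hcorr x i).1 hi, ← (hcorr y j).1 hj, OrderEmbedding.lt_iff_lt,
        OrderEmbedding.lt_iff_lt])
    (by
      rintro _ - - ⟨x, rfl, hx⟩
      obtain ⟨i, hi⟩ := exists_orderEmbOfFin_eq hσ hx
      have hdir := congrArg Prod.snd (congrFun h i)
      simpa [ladderCode, hi, (hcorr x i).1 hi] using hdir)
  have horder (v w : Fin k) (hvw : v < w) : σ.symm v < σ.symm w ↔ τ.symm v < τ.symm w := by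
    have hw := w.isLt
    have hvw' : (v : ℕ) < w := hvw
    simpa [sigmaTilde_val_add_one] using
      key _ (v + 1) (w + 1) rfl (by omega) (by omega)
  have hmono : StrictMono fun i => σ.symm (τ i) := by
    intro i j hij
    rcases lt_trichotomy (τ i) (τ j) with hlt | heq | hlt
    · exact (horder _ _ hlt).2 (by simpa using hij)
    · exact absurd (τ.injective heq) hij.ne
    · have hnot : ¬ σ.symm (τ j) < σ.symm (τ i) := by
        rw [horder _ _ hlt]
        simpa using hij.le
      exact lt_of_le_of_ne (not_lt.1 hnot) fun heq => hlt.ne' (σ.symm.injective heq)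
  have hid : (fun i => σ.symm (τ i)) = id := by
    refine (StrictMono.range_inj hmono strictMono_id).1 ?_
    rw [Set.range_id]
    exact (σ.symm.surjective.comp τ.surjective).range_eq
  ext i
  have hi := congrFun hid i
  simp only [id, Equiv.symm_apply_eq] at hi
  rw [hi]


/-- Estimate (7.9) of the paper (the counting step of Lemma 7.2): the number of
permutations `σ` of `{1,…,k}` with exactly `ℓ` ladder indices is at most `2·(2k)^{k-ℓ}`. -/
theorem card_perms_with_ladderCount_le
    (k : ℕ) (hk : 1 ≤ k) (ℓ : ℕ) (hℓ : ℓ ≤ k) :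
    ((Finset.univ : Finset (Equiv.Perm (Fin k))).filter fun σ => ladderCount k σ = ℓ).card
      ≤ 2 * (2 * k) ^ (k - ℓ) := by
  have hcard (σ : {σ : Equiv.Perm (Fin k) // ladderCount k σ = ℓ}) :
      (nonladders k σ.1).card = k - ℓ := by
    rw [card_nonladders, σ.2]
  have hle := Fintype.card_le_of_injective
    (fun σ : {σ : Equiv.Perm (Fin k) // ladderCount k σ = ℓ} => ladderCode σ.1 (hcard σ))
    fun σ τ h => Subtype.ext (eq_of_ladderCode_eq (hcard σ) (hcard τ) h)
  rw [Fintype.card_subtype] at hle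
  simp only [Fintype.card_pi_const, Fintype.card_prod, Fintype.card_fin, Fintype.card_bool] at hle
  rw [mul_comm k 2] at hle
  omega
end

section
/- Let m ≥ 1 and H ≥ 1 be integers. Then ∑_{(a_1,…,a_m)} ∏_{ν=1}^{m} (a_ν − 1)! ≤ (H − 1)!, where the sum runs over all sequences (a_1,…,a_m) of integers with a_ν ≥ 2 for every ν and a_1 + ⋯ + a_m = H (the empty sum being 0 if no such sequence exists). -/
open Finset Nat

theorem sum_factorial_mul_factorial_le (H : ℕ) :
    ∑ k ∈ Icc 2 (H - 2), (k - 1)! * (H - k - 1)! ≤ (H - 1)! := by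
  have hterm : ∀ k ∈ Icc 2 (H - 2), (k - 1)! * (H - k - 1)! ≤ (H - 2)! := by
    intro k hk
    rw [mem_Icc] at hk
    have hsum : k - 1 + (H - k - 1) = H - 2 := by omega
    rw [← hsum]
    exact Nat.le_of_dvd (factorial_pos _) (factorial_mul_factorial_dvd_factorial_add _ _)
  refine (sum_le_card_nsmul _ _ _ hterm).trans ?_
  rw [Nat.card_Icc, smul_eq_mul]
  rcases Nat.lt_or_ge H 2 with h | h
  · have hcard : H - 2 + 1 - 2 = 0 := by omega
    simp [hcard]
  · have hpred : H - 1 = (H - 2) + 1 := by omega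
    rw [hpred, factorial_succ]
    gcongr
    omega

/-- The tuples with entries at least two and first entry `k` are obtained by prepending `k` to
such tuples with total `H - k`. -/
theorem sum_prod_filter_head_eq {M : Type*} [CommSemiring M] (f : ℕ → M) (m : ℕ) {H k : ℕ}
    (hk : 2 ≤ k) (hkH : k ≤ H) :
    ∑ a ∈ ((Finset.Nat.antidiagonalTuple (m + 1) H).filter (fun a => ∀ ν, 2 ≤ a ν)).filter
        (fun a => a 0 = k), ∏ ν, f (a ν) =
      f k * ∑ b ∈ (Finset.Nat.antidiagonalTuple m (H - k)).filter (fun b => ∀ ν, 2 ≤ b ν),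
        ∏ ν, f (b ν) := by
  rw [mul_sum]
  refine sum_nbij' Fin.tail (fun b => Fin.cons k b) ?_ ?_ ?_ ?_ ?_
  · intro a ha
    simp only [mem_filter, Finset.Nat.mem_antidiagonalTuple, Fin.sum_univ_succ] at ha ⊢
    obtain ⟨⟨hsum, hge⟩, rfl⟩ := ha
    exact ⟨by simp only [Fin.tail]; omega, fun ν => hge ν.succ⟩
  · intro b hb
    simp only [mem_filter, Finset.Nat.mem_antidiagonalTuple, Fin.sum_univ_succ,
      Fin.forall_fin_succ, Fin.cons_zero, Fin.cons_succ] at hb ⊢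
    exact ⟨⟨by omega, hk, hb.2⟩, trivial⟩
  · intro a ha
    rw [← (mem_filter.1 ha).2]
    exact Fin.cons_self_tail a
  · intro b _
    exact Fin.tail_cons _ _
  · intro a ha
    rw [Fin.prod_univ_succ, (mem_filter.1 ha).2]
    rfl

/-- Inequality (8.9) of the paper: summing the product `∏_ν (a_ν - 1)!` over all sequences
`(a_1, …, a_m)` of integers `a_ν ≥ 2` with total sum `H` gives at most `(H-1)!`. -/
theorem sum_prod_factorial_le
    (m H : ℕ) (hm : 1 ≤ m) (hH : 1 ≤ H) :
    ∑ a ∈ (Finset.Nat.antidiagonalTuple m H).filter (fun a => ∀ ν, 2 ≤ a ν),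
        ∏ ν, (a ν - 1)! ≤ (H - 1)! := by
  induction m, hm using Nat.le_induction generalizing H with
  | base =>
    refine (sum_le_sum_of_subset (filter_subset _ _)).trans ?_
    simp
  | succ m hm ih =>
    have hmaps : ∀ a ∈ (Finset.Nat.antidiagonalTuple (m + 1) H).filter (fun a => ∀ ν, 2 ≤ a ν),
        a 0 ∈ Icc 2 (H - 2) := by
      intro a ha
      simp only [mem_filter, Finset.Nat.mem_antidiagonalTuple, Fin.sum_univ_succ] at ha
      have htail : a (Fin.succ ⟨0, hm⟩) ≤ ∑ i : Fin m, a i.succ :=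
        single_le_sum (f := fun i : Fin m => a i.succ) (fun _ _ => Nat.zero_le _) (mem_univ _)
      have hhead := ha.2 0
      have hnext := ha.2 (Fin.succ ⟨0, hm⟩)
      rw [mem_Icc]
      omega
    rw [← sum_fiberwise_of_maps_to hmaps]
    refine (sum_le_sum fun k hk => ?_).trans (sum_factorial_mul_factorial_le H)
    rw [mem_Icc] at hk
    rw [sum_prod_filter_head_eq (fun n => (n - 1)!) m hk.1 (by omega)]
    exact Nat.mul_le_mul_left _ (ih (H - k) (by omega))
end

section
/- Let d ≥ 3, κ ∈ (0,1] and δ ∈ (0,1]. There exist C > 0 and λ₀ ∈ (0,1) such that for all λ ∈ (0,λ₀), setting η := λ^{2+κ} and ζ := λ^{−κ−3δ}, and for all α ∈ ℝ and all r ∈ ℝ^d: ∫_{|p| ≤ ζ} dp / ( |α − |p|²/2 + iη| · (η + min(|p − r|, 1)) ) ≤ C · ζ^{d−2} · log(1/η). -/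
open MeasureTheory Set Metric
open scoped ENNReal

/-- The inverse distance to the ray spanned by `e`, measured at equal norm, is controlled by an
average of inverse square distances to points of the ray. -/
lemma inv_enorm_sub_norm_smul_le {E : Type*} [NormedAddCommGroup E] [NormedSpace ℝ E]
    {e p : E} (he : ‖e‖ ≤ 1) (hp : ‖p‖ ≤ 1) :
    ‖p - ‖p‖ • e‖ₑ⁻¹ ≤ 4 * ∫⁻ t in Icc (0 : ℝ) 4, (‖p - t • e‖ₑ ^ 2)⁻¹ := by
  set X := 4 * ∫⁻ t in Icc (0 : ℝ) 4, (‖p - t • e‖ₑ ^ 2)⁻¹ with hX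
  rw [ENNReal.inv_le_iff_inv_le]
  refine le_of_forall_gt_imp_ge_of_dense fun b hb => ?_
  have ha : ‖p - ‖p‖ • e‖ < 3 := by
    have h1 := norm_sub_le p (‖p‖ • e)
    rw [norm_smul, norm_norm] at h1
    nlinarith [norm_nonneg p, norm_nonneg e]
  have ha' : ‖p - ‖p‖ • e‖ₑ < 3 := by
    rw [← ofReal_norm, show (3 : ℝ≥0∞) = ENNReal.ofReal 3 by simp]
    exact (ENNReal.ofReal_lt_ofReal_iff (by norm_num)).2 ha
  obtain ⟨a', h1, h2⟩ := exists_between (lt_min hb ha')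
  have ha'top : a' ≠ ∞ := (h2.trans_le (min_le_right _ _)).ne_top
  lift a' to NNReal using ha'top
  have h3 : (a' : ℝ) < 3 := by exact_mod_cast (h2.trans_le (min_le_right _ _))
  have ha'a : ‖p - ‖p‖ • e‖ < a' := by
    have : ‖p - ‖p‖ • e‖₊ < a' := by exact_mod_cast h1
    exact_mod_cast this
  have hpos : (0 : ℝ) < a' := (norm_nonneg _).trans_lt ha'a
  have hpos' : a' ≠ 0 := by exact_mod_cast hpos.ne'
  refine le_trans ?_ (h2.le.trans (min_le_left _ _))
  rw [ENNReal.inv_le_iff_inv_le, hX]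
  calc (a' : ℝ≥0∞)⁻¹ = 4 * (((2 * a' : NNReal) : ℝ≥0∞) ^ 2)⁻¹ * ENNReal.ofReal a' := by
        rw [ENNReal.ofReal_coe_nnreal]
        have : a'⁻¹ = 4 * ((2 * a') ^ 2)⁻¹ * a' := by field_simp; norm_num
        rw [← ENNReal.coe_inv hpos', ← ENNReal.coe_pow, ← ENNReal.coe_inv (by positivity), this]
        push_cast
        rfl
    _ = 4 * ∫⁻ t in Icc ‖p‖ (‖p‖ + a'), (((2 * a' : NNReal) : ℝ≥0∞) ^ 2)⁻¹ := by
        simp [mul_assoc]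
    _ ≤ 4 * ∫⁻ t in Icc ‖p‖ (‖p‖ + a'), (‖p - t • e‖ₑ ^ 2)⁻¹ := by
        gcongr 4 * ?_
        refine setLIntegral_mono' measurableSet_Icc fun t ht => ?_
        gcongr
        rw [← ofReal_norm, ← ENNReal.ofReal_coe_nnreal]
        refine ENNReal.ofReal_le_ofReal ?_
        have hsplit : p - t • e = (p - ‖p‖ • e) - (t - ‖p‖) • e := by
          rw [sub_smul]; abel
        have h4 := norm_sub_le (p - ‖p‖ • e) ((t - ‖p‖) • e)
        rw [norm_smul, Real.norm_of_nonneg (sub_nonneg.2 ht.1), ← hsplit] at h4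
        have h5 : (t - ‖p‖) * ‖e‖ ≤ (t - ‖p‖) * 1 :=
          mul_le_mul_of_nonneg_left he (sub_nonneg.2 ht.1)
        have := ht.2
        push_cast
        linarith
    _ ≤ 4 * ∫⁻ t in Icc (0 : ℝ) 4, (‖p - t • e‖ₑ ^ 2)⁻¹ := by
        gcongr 4 * ?_
        refine lintegral_mono_set (Icc_subset_Icc (norm_nonneg p) (by linarith))

section Polar

variable {E : Type*} [NormedAddCommGroup E] [NormedSpace ℝ E] [MeasurableSpace E] [BorelSpace E]
  [FiniteDimensional ℝ E] (μ : Measure E) [μ.IsAddHaarMeasure]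

/-- Polar coordinates for the product of a radial and an angular function. -/
lemma lintegral_radial_mul_angular [Nontrivial E] {F : ℝ → ℝ≥0∞} {H : E → ℝ≥0∞}
    (hF : Measurable F) (hH : Measurable H) :
    ∫⁻ p, F ‖p‖ * H (‖p‖⁻¹ • p) ∂μ =
      (∫⁻ ω, H ω ∂μ.toSphere) *
        ∫⁻ ρ in Ioi (0 : ℝ), ENNReal.ofReal (ρ ^ (Module.finrank ℝ E - 1)) * F ρ := by
  have hsing : MeasurableSet ({(0 : E)}ᶜ) := (measurableSet_singleton _).compl
  have hprod := μ.measurePreserving_homeomorphUnitSphereProd.lintegral_comp_emb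
    (Homeomorph.measurableEmbedding _)
    (fun z : sphere (0 : E) 1 × Ioi (0 : ℝ) => H z.1 * F z.2)
  rw [lintegral_prod_mul (f := fun ω : sphere (0 : E) 1 => H ω) (g := fun ρ : Ioi (0 : ℝ) => F ρ)
    (by fun_prop) (by fun_prop), Measure.volumeIoiPow,
    lintegral_withDensity_eq_lintegral_mul _ (by fun_prop) (by fun_prop)] at hprod
  simp only [Pi.mul_apply] at hprod
  rw [lintegral_subtype_comap measurableSet_Ioi
    (fun ρ : ℝ => ENNReal.ofReal (ρ ^ (Module.finrank ℝ E - 1)) * F ρ)] at hprod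
  rw [← hprod, ← restrict_compl_singleton (μ := μ) 0, ← lintegral_subtype_comap hsing]
  simp [mul_comm]

lemma lintegral_Ioo_zero_one_pow (n : ℕ) :
    ∫⁻ ρ in Ioi (0 : ℝ), ENNReal.ofReal (ρ ^ n) * (Iio (1 : ℝ)).indicator 1 ρ =
      ENNReal.ofReal (1 / (n + 1)) := by
  have h := Measure.volumeIoiPow_apply_Iio n ⟨1, mem_Ioi.2 one_pos⟩
  rw [Measure.volumeIoiPow, withDensity_apply _ measurableSet_Iio,
    setLIntegral_subtype measurableSet_Ioi _ fun a : ℝ ↦ .ofReal (a ^ n),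
    image_subtype_val_Ioi_Iio] at h
  simp only [one_pow] at h
  rw [← h, ← Ioi_inter_Iio, inter_comm, ← Measure.restrict_restrict measurableSet_Iio,
    ← lintegral_indicator measurableSet_Iio]
  refine lintegral_congr fun ρ => ?_
  by_cases hρ : ρ < 1 <;> simp [hρ, indicator]

/-- The inverse square is integrable near the origin in dimension at least three. -/
lemma lintegral_ball_inv_norm_sq_lt_top (hn : 3 ≤ Module.finrank ℝ E) :
    ∫⁻ p in ball (0 : E) 1, (‖p‖ₑ ^ 2)⁻¹ ∂μ < ∞ := by
  have : Nontrivial E := Module.nontrivial_of_finrank_pos (R := ℝ) (by omega)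
  have hpolar := lintegral_radial_mul_angular μ
    (F := (Iio (1 : ℝ)).indicator fun ρ => (ENNReal.ofReal ρ ^ 2)⁻¹) (H := fun _ => 1)
    (Measurable.indicator (by fun_prop) measurableSet_Iio) measurable_const
  have hball : ∫⁻ p in ball (0 : E) 1, (‖p‖ₑ ^ 2)⁻¹ ∂μ =
      ∫⁻ p : E, (Iio (1 : ℝ)).indicator (fun ρ => (ENNReal.ofReal ρ ^ 2)⁻¹) ‖p‖ * 1 ∂μ := by
    rw [← lintegral_indicator measurableSet_ball]
    refine lintegral_congr fun p => ?_
    by_cases hp : ‖p‖ < 1 <;> simp [hp, indicator, ofReal_norm]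
  rw [hball, hpolar]
  refine ENNReal.mul_lt_top (by rw [lintegral_one]; exact measure_lt_top _ _) ?_
  calc ∫⁻ ρ in Ioi (0 : ℝ), ENNReal.ofReal (ρ ^ (Module.finrank ℝ E - 1)) *
          (Iio (1 : ℝ)).indicator (fun ρ => (ENNReal.ofReal ρ ^ 2)⁻¹) ρ
      ≤ ∫⁻ ρ in Ioi (0 : ℝ), ENNReal.ofReal (ρ ^ 0) * (Iio (1 : ℝ)).indicator 1 ρ := by
        refine setLIntegral_mono' measurableSet_Ioi fun ρ hρ => ?_
        have hρ0 : (0 : ℝ) < ρ := hρ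
        by_cases h1 : ρ < 1
        · simp only [indicator, mem_Iio, h1, if_true, Pi.one_apply, mul_one, pow_zero]
          rw [← ENNReal.ofReal_pow hρ0.le, ← ENNReal.ofReal_inv_of_pos (by positivity),
            ← ENNReal.ofReal_mul (by positivity)]
          refine ENNReal.ofReal_le_ofReal ?_
          rw [← div_eq_mul_inv, div_le_one (by positivity)]
          exact pow_le_pow_of_le_one hρ0.le h1.le (by omega)
        · simp [indicator, h1]
    _ < ∞ := by
        rw [lintegral_Ioo_zero_one_pow]
        exact ENNReal.ofReal_lt_top

lemma lintegral_ball_inv_norm_sub_sq_le (c : E) :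
    ∫⁻ p in ball (0 : E) 1, (‖p - c‖ₑ ^ 2)⁻¹ ∂μ ≤
      μ (ball 0 1) + ∫⁻ p in ball (0 : E) 1, (‖p‖ₑ ^ 2)⁻¹ ∂μ := by
  set G : E → ℝ≥0∞ := (ball (0 : E) 1).indicator fun p => (‖p‖ₑ ^ 2)⁻¹ with hG
  have hGm : Measurable G := Measurable.indicator (by fun_prop) measurableSet_ball
  calc ∫⁻ p in ball (0 : E) 1, (‖p - c‖ₑ ^ 2)⁻¹ ∂μ
      ≤ ∫⁻ p in ball (0 : E) 1, (1 + G (p - c)) ∂μ := by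
        refine lintegral_mono fun p => ?_
        by_cases hp : ‖p - c‖ < 1
        · simp [hG, hp]
        · have h1 : 1 ≤ ‖p - c‖ₑ := by
            rw [← ofReal_norm, ENNReal.one_le_ofReal]; exact not_lt.1 hp
          exact (ENNReal.inv_le_one.2 (one_le_pow₀ h1)).trans le_self_add
    _ ≤ μ (ball 0 1) + ∫⁻ p, G (p - c) ∂μ := by
        rw [lintegral_add_left measurable_const]
        simpa using add_le_add_right (setLIntegral_le_lintegral _ _) _
    _ = _ := by
        rw [lintegral_sub_right_eq_self, hG, lintegral_indicator measurableSet_ball]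

/-- The potential of the surface measure of the unit sphere is bounded on the unit ball. -/
lemma exists_lintegral_toSphere_inv_le (hn : 3 ≤ Module.finrank ℝ E) :
    ∃ M : ℝ≥0∞, M ≠ ∞ ∧ ∀ e : E, ‖e‖ ≤ 1 →
      ∫⁻ ω, ‖(ω : E) - e‖ₑ⁻¹ ∂μ.toSphere ≤ M := by
  have : Nontrivial E := Module.nontrivial_of_finrank_pos (R := ℝ) (by omega)
  set B := μ (ball 0 1) + ∫⁻ p in ball (0 : E) 1, (‖p‖ₑ ^ 2)⁻¹ ∂μ
  have hBtop : B ≠ ∞ :=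
    ENNReal.add_ne_top.2 ⟨measure_ball_lt_top.ne, (lintegral_ball_inv_norm_sq_lt_top μ hn).ne⟩
  set c : ℝ≥0∞ := ENNReal.ofReal (1 / ((Module.finrank ℝ E - 1 : ℕ) + 1)) with hc
  have hc0 : c ≠ 0 := (ENNReal.ofReal_pos.2 (by positivity)).ne'
  refine ⟨4 * (B * 4) / c, ENNReal.div_ne_top (by finiteness) hc0, fun e he => ?_⟩
  rw [ENNReal.le_div_iff_mul_le (Or.inl hc0) (Or.inl ENNReal.ofReal_ne_top), hc,
    ← lintegral_Ioo_zero_one_pow, ← lintegral_radial_mul_angular μ (H := fun x => ‖x - e‖ₑ⁻¹)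
      (Measurable.indicator measurable_one measurableSet_Iio) (by fun_prop)]
  calc ∫⁻ p, (Iio (1 : ℝ)).indicator 1 ‖p‖ * ‖‖p‖⁻¹ • p - e‖ₑ⁻¹ ∂μ
      ≤ ∫⁻ p in ball (0 : E) 1, 4 * (∫⁻ t in Icc (0 : ℝ) 4, (‖p - t • e‖ₑ ^ 2)⁻¹) ∂μ := by
        rw [← lintegral_indicator measurableSet_ball, ← restrict_compl_singleton (μ := μ) 0]
        refine setLIntegral_mono' (measurableSet_singleton _).compl fun p hp => ?_
        by_cases hp1 : ‖p‖ < 1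
        · simp only [indicator, mem_Iio, hp1, if_true, Pi.one_apply, one_mul, mem_ball,
            dist_zero_right]
          refine le_trans ?_ (inv_enorm_sub_norm_smul_le he hp1.le)
          gcongr
          have hp0 : 0 < ‖p‖ := norm_pos_iff.2 hp
          have : p - ‖p‖ • e = ‖p‖ • (‖p‖⁻¹ • p - e) := by
            rw [smul_sub, smul_smul, mul_inv_cancel₀ hp0.ne', one_smul]
          rw [this, enorm_smul]
          refine mul_le_of_le_one_left (by simp) ?_
          rw [enorm_norm, ← ofReal_norm, ENNReal.ofReal_le_one]
          exact hp1.le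
        · simp [indicator, hp1]
    _ = 4 * ∫⁻ t in Icc (0 : ℝ) 4, ∫⁻ p in ball (0 : E) 1, (‖p - t • e‖ₑ ^ 2)⁻¹ ∂μ := by
        rw [lintegral_const_mul' _ _ (by simp), lintegral_lintegral_swap]
        have : Measurable (Function.uncurry fun (p : E) (t : ℝ) => (‖p - t • e‖ₑ ^ 2)⁻¹) := by
          unfold Function.uncurry; fun_prop
        exact this.aemeasurable
    _ ≤ 4 * ∫⁻ t in Icc (0 : ℝ) 4, B := by
        gcongr with t
        exact lintegral_ball_inv_norm_sub_sq_le μ _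
    _ = 4 * (B * 4) := by simp

/-- A point singularity costs one power of the radius, uniformly in its location. -/
lemma exists_lintegral_radial_mul_inv_le (hn : 3 ≤ Module.finrank ℝ E) :
    ∃ M : ℝ≥0∞, M ≠ ∞ ∧ ∀ (F : ℝ → ℝ≥0∞) (r : E), Measurable F →
      ∫⁻ p, F ‖p‖ * ‖p - r‖ₑ⁻¹ ∂μ ≤
        M * ∫⁻ ρ in Ioi (0 : ℝ), ENNReal.ofReal (ρ ^ (Module.finrank ℝ E - 2)) * F ρ := by
  have : Nontrivial E := Module.nontrivial_of_finrank_pos (R := ℝ) (by omega)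
  obtain ⟨M, hM, hMle⟩ := exists_lintegral_toSphere_inv_le μ hn
  refine ⟨2 * M, by finiteness, fun F r hF => ?_⟩
  set e : E := ‖r‖⁻¹ • r with he
  have hre : r = ‖r‖ • e := by
    by_cases hr : r = 0
    · simp [hr]
    · rw [he, smul_smul, mul_inv_cancel₀ (norm_ne_zero_iff.2 hr), one_smul]
  have he1 : ‖e‖ ≤ 1 := by
    rw [he, norm_smul, norm_inv, norm_norm]
    exact inv_mul_le_one
  calc ∫⁻ p, F ‖p‖ * ‖p - r‖ₑ⁻¹ ∂μ
      ≤ ∫⁻ p, 2 * (F ‖p‖ * (ENNReal.ofReal ‖p‖)⁻¹ * ‖‖p‖⁻¹ • p - e‖ₑ⁻¹) ∂μ := by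
        rw [← restrict_compl_singleton (μ := μ) 0]
        refine setLIntegral_mono' (measurableSet_singleton _).compl fun p hp => ?_
        have hp0 : 0 < ‖p‖ := norm_pos_iff.2 hp
        have hdist : ‖p‖ * ‖‖p‖⁻¹ • p - e‖ ≤ 2 * ‖p - r‖ := by
          have h1 : ‖p‖ • (‖p‖⁻¹ • p - e) = (p - r) + (‖r‖ - ‖p‖) • e := by
            rw [smul_sub, smul_smul, mul_inv_cancel₀ hp0.ne', one_smul, sub_smul, ← hre]; abel
          have h2 := norm_add_le (p - r) ((‖r‖ - ‖p‖) • e)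
          rw [← h1, norm_smul, norm_smul, norm_norm, Real.norm_eq_abs] at h2
          have h3 := abs_norm_sub_norm_le r p
          rw [norm_sub_rev] at h3
          have h4 : |‖r‖ - ‖p‖| * ‖e‖ ≤ |‖r‖ - ‖p‖| * 1 :=
            mul_le_mul_of_nonneg_left he1 (abs_nonneg _)
          linarith
        have hdist' : ENNReal.ofReal ‖p‖ * ‖‖p‖⁻¹ • p - e‖ₑ ≤ 2 * ‖p - r‖ₑ := by
          rw [← ofReal_norm, ← ofReal_norm, ← ENNReal.ofReal_mul hp0.le,
            show (2 : ℝ≥0∞) = ENNReal.ofReal 2 by simp, ← ENNReal.ofReal_mul (by norm_num)]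
          exact ENNReal.ofReal_le_ofReal hdist
        have hinv : ‖p - r‖ₑ⁻¹ ≤ 2 * ((ENNReal.ofReal ‖p‖)⁻¹ * ‖‖p‖⁻¹ • p - e‖ₑ⁻¹) := by
          rw [← ENNReal.mul_inv (Or.inr (by finiteness)) (Or.inl (by finiteness)),
            ← div_eq_mul_inv, ENNReal.inv_le_iff_inv_le,
            ENNReal.inv_div (Or.inl (by finiteness)) (Or.inr (by simp))]
          exact ENNReal.div_le_of_le_mul' hdist'
        calc F ‖p‖ * ‖p - r‖ₑ⁻¹
            ≤ F ‖p‖ * (2 * ((ENNReal.ofReal ‖p‖)⁻¹ * ‖‖p‖⁻¹ • p - e‖ₑ⁻¹)) := by gcongr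
          _ = _ := by ring
    _ = 2 * ((∫⁻ ω, ‖(ω : E) - e‖ₑ⁻¹ ∂μ.toSphere) *
          ∫⁻ ρ in Ioi (0 : ℝ), ENNReal.ofReal (ρ ^ (Module.finrank ℝ E - 1)) *
            (F ρ * (ENNReal.ofReal ρ)⁻¹)) := by
        rw [lintegral_const_mul' _ _ (by simp),
          lintegral_radial_mul_angular μ (F := fun ρ => F ρ * (ENNReal.ofReal ρ)⁻¹)
            (H := fun x => ‖x - e‖ₑ⁻¹) (by fun_prop) (by fun_prop)]
    _ ≤ 2 * (M * ∫⁻ ρ in Ioi (0 : ℝ), ENNReal.ofReal (ρ ^ (Module.finrank ℝ E - 2)) * F ρ) := by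
        gcongr 2 * (?_ * ?_)
        · exact hMle e he1
        · refine setLIntegral_mono' measurableSet_Ioi fun ρ hρ => le_of_eq ?_
          have hρ0 : (0 : ℝ) < ρ := hρ
          rw [show Module.finrank ℝ E - 1 = Module.finrank ℝ E - 2 + 1 by omega, pow_succ,
            ENNReal.ofReal_mul (by positivity), mul_comm (F ρ), mul_assoc, ← mul_assoc _ _ (F ρ),
            ENNReal.mul_inv_cancel (ENNReal.ofReal_pos.2 hρ0).ne' ENNReal.ofReal_ne_top, one_mul]
    _ = _ := by ring

end Polar

/-- Increments of `arsinh` are controlled by the length of the interval alone. -/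
lemma Real.arsinh_add_sub_arsinh_le (a : ℝ) {w : ℝ} (hw : 0 ≤ w) :
    Real.arsinh (a + w) - Real.arsinh a ≤ 2 * Real.arsinh w := by
  have hsub : ∀ x : ℝ, 0 ≤ x → Real.arsinh (x + w) ≤ Real.arsinh x + Real.arsinh w := by
    intro x hx
    rw [← Real.sinh_le_sinh, Real.sinh_add]
    simp only [Real.sinh_arsinh, Real.cosh_arsinh]
    have h1 : 1 ≤ √(1 + w ^ 2) := Real.one_le_sqrt.2 (by nlinarith)
    have h2 : 1 ≤ √(1 + x ^ 2) := Real.one_le_sqrt.2 (by nlinarith)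
    nlinarith
  have hw' : 0 ≤ Real.arsinh w := Real.arsinh_nonneg_iff.2 hw
  rcases le_total 0 a with ha | ha
  · linarith [hsub a ha]
  rcases le_total (a + w) 0 with hb | hb
  · have h := hsub (-(a + w)) (by linarith)
    rw [show -(a + w) + w = -a by ring, Real.arsinh_neg, Real.arsinh_neg] at h
    linarith
  · have h1 : Real.arsinh (a + w) ≤ Real.arsinh w := Real.arsinh_le_arsinh.2 (by linarith)
    have h2 : Real.arsinh (-a) ≤ Real.arsinh w := Real.arsinh_le_arsinh.2 (by linarith)
    rw [Real.arsinh_neg] at h2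
    linarith

lemma Real.arsinh_le_log_one_add_two_mul {w : ℝ} (hw : 0 ≤ w) :
    Real.arsinh w ≤ Real.log (1 + 2 * w) := by
  rw [Real.le_log_iff_exp_le (by positivity), Real.exp_arsinh]
  have : √(1 + w ^ 2) ≤ 1 + w := Real.sqrt_le_iff.2 ⟨by positivity, by nlinarith⟩
  linarith

/-- The radial integral of the resolvent costs a logarithm, uniformly in the spectral parameter. -/
lemma lintegral_Ioc_mul_inv_resolvent_le (α : ℝ) {η Z : ℝ} (hη : 0 < η) (hZ : 0 ≤ Z) :
    ∫⁻ ρ in Ioc 0 Z, ENNReal.ofReal (ρ * (√((α - ρ ^ 2 / 2) ^ 2 + η ^ 2))⁻¹) ≤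
      ENNReal.ofReal (2 * Real.log (1 + Z ^ 2 / η)) := by
  have hsqrt : ∀ ρ : ℝ, 0 < √((α - ρ ^ 2 / 2) ^ 2 + η ^ 2) := fun ρ => by positivity
  have hcont : Continuous fun ρ : ℝ => ρ * (√((α - ρ ^ 2 / 2) ^ 2 + η ^ 2))⁻¹ :=
    continuous_id.mul (Continuous.inv₀ (by fun_prop) fun ρ => (hsqrt ρ).ne')
  have hderiv : ∀ ρ ∈ uIcc 0 Z, HasDerivAt (fun ρ => Real.arsinh ((ρ ^ 2 / 2 - α) / η))
      (ρ * (√((α - ρ ^ 2 / 2) ^ 2 + η ^ 2))⁻¹) ρ := by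
    intro ρ _
    have h1 : HasDerivAt (fun ρ : ℝ => (ρ ^ 2 / 2 - α) / η) (ρ / η) ρ := by
      refine ((((hasDerivAt_pow 2 ρ).div_const 2).sub_const α).div_const η).congr_deriv ?_
      norm_num
    convert h1.arsinh using 1
    have h2 : (α - ρ ^ 2 / 2) ^ 2 + η ^ 2 = η ^ 2 * (1 + ((ρ ^ 2 / 2 - α) / η) ^ 2) := by
      field_simp; ring
    rw [h2, Real.sqrt_mul (sq_nonneg η), Real.sqrt_sq hη.le, smul_eq_mul, mul_inv]
    ring
  rw [← ofReal_integral_eq_lintegral_ofReal (hcont.integrableOn_Ioc)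
    ((ae_restrict_mem measurableSet_Ioc).mono fun ρ hρ =>
      mul_nonneg hρ.1.le (inv_nonneg.2 (hsqrt ρ).le)),
    ← intervalIntegral.integral_of_le hZ,
    intervalIntegral.integral_eq_sub_of_hasDerivAt hderiv (hcont.intervalIntegrable _ _)]
  refine ENNReal.ofReal_le_ofReal ?_
  have h1 := Real.arsinh_add_sub_arsinh_le (-α / η) (w := Z ^ 2 / 2 / η) (by positivity)
  have h2 := Real.arsinh_le_log_one_add_two_mul (w := Z ^ 2 / 2 / η) (by positivity)
  have e1 : (Z ^ 2 / 2 - α) / η = -α / η + Z ^ 2 / 2 / η := by ring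
  have e2 : ((0 : ℝ) ^ 2 / 2 - α) / η = -α / η := by ring
  have e3 : 1 + Z ^ 2 / η = 1 + 2 * (Z ^ 2 / 2 / η) := by ring
  rw [e1, e2, e3]
  linarith

/-- With `η = l ^ (2 + κ)` and `ζ = l ^ (-κ - 3 * δ)`, the logarithm of `1 + ζ ^ 2 / η` is
comparable to that of `1 / η`. -/
lemma log_one_add_cutoff_le {κ δ l : ℝ} (hκ : κ ∈ Ioc (0 : ℝ) 1) (hδ : δ ∈ Ioc (0 : ℝ) 1)
    (hl : 0 < l) (hl' : l < 1 / 2) :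
    Real.log (1 + (l ^ (-κ - 3 * δ)) ^ 2 / l ^ (2 + κ)) ≤ 6 * Real.log (1 / l ^ (2 + κ)) := by
  obtain ⟨hκ0, hκ1⟩ := hκ
  obtain ⟨hδ0, hδ1⟩ := hδ
  have hratio : (l ^ (-κ - 3 * δ)) ^ 2 / l ^ (2 + κ) = l ^ (-(2 + 3 * κ + 6 * δ)) := by
    rw [← Real.rpow_natCast, ← Real.rpow_mul hl.le, ← Real.rpow_sub hl]
    congr 1; push_cast; ring
  have hone : 1 ≤ l ^ (-(2 + 3 * κ + 6 * δ)) :=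
    Real.one_le_rpow_of_pos_of_le_one_of_nonpos hl (by linarith) (by linarith)
  have htwo : 2 ≤ l⁻¹ := by
    rw [le_inv_comm₀ (by norm_num) hl]; linarith
  have hlog : 0 ≤ -Real.log l := by linarith [Real.log_nonpos hl.le (by linarith)]
  rw [hratio, one_div, Real.log_inv, Real.log_rpow hl]
  calc Real.log (1 + l ^ (-(2 + 3 * κ + 6 * δ)))
      ≤ Real.log (l⁻¹ * l ^ (-(2 + 3 * κ + 6 * δ))) :=
        Real.log_le_log (by positivity) (by nlinarith)
    _ = (3 + 3 * κ + 6 * δ) * -Real.log l := by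
        rw [Real.log_mul (by positivity) (by positivity), Real.log_inv, Real.log_rpow hl]; ring
    _ ≤ 6 * ((2 + κ) * -Real.log l) := by nlinarith
    _ = _ := by ring

/-- Radial moments of the truncated resolvent. -/
lemma lintegral_pow_mul_indicator_resolvent_le (α : ℝ) {η Z : ℝ} (hη : 0 < η) (hZ : 0 ≤ Z)
    (k : ℕ) :
    ∫⁻ ρ in Ioi (0 : ℝ), ENNReal.ofReal (ρ ^ (k + 1)) *
        (Iic Z).indicator (fun ρ => ENNReal.ofReal (√((α - ρ ^ 2 / 2) ^ 2 + η ^ 2))⁻¹) ρ ≤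
      ENNReal.ofReal (Z ^ k * (2 * Real.log (1 + Z ^ 2 / η))) := by
  rw [ENNReal.ofReal_mul (by positivity)]
  refine le_trans ?_ (mul_le_mul_right (lintegral_Ioc_mul_inv_resolvent_le α hη hZ) _)
  rw [← lintegral_const_mul' _ _ ENNReal.ofReal_ne_top, ← Iic_inter_Ioi,
    ← Measure.restrict_restrict measurableSet_Iic, ← lintegral_indicator measurableSet_Iic]
  refine setLIntegral_mono' measurableSet_Ioi fun ρ hρ => ?_
  have hρ0 : (0 : ℝ) < ρ := hρ
  by_cases h : ρ ≤ Z
  · simp only [indicator, mem_Iic, h, if_true]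
    rw [← ENNReal.ofReal_mul (by positivity), ← ENNReal.ofReal_mul (by positivity), pow_succ,
      mul_assoc]
    gcongr
  · simp [indicator, h]

/-- Estimate (A.5) from the proof of the paper's Appendix Lemma A.2: with `η = λ^{2+κ}`,
`ζ = λ^{-κ-3δ}`, one free resolvent paired with one point singularity
`(η + min(|p-r|,1))^{-1}` integrates over `{|p| ≤ ζ}` to at most `C ζ^{d-2} log(1/η)`,
uniformly in the spectral parameter `α` and the location `r`. -/
theorem one_resolvent_point_singularity_bound
    (d : ℕ) (hd : 3 ≤ d) (κ δ : ℝ) (hκ : κ ∈ Set.Ioc (0 : ℝ) 1) (hδ : δ ∈ Set.Ioc (0 : ℝ) 1) :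
    ∃ C > (0 : ℝ), ∃ l₀ ∈ Set.Ioo (0 : ℝ) 1, ∀ l : ℝ, 0 < l → l < l₀ →
      ∀ α : ℝ, ∀ r : EuclideanSpace ℝ (Fin d),
        (∫ p in Metric.closedBall (0 : EuclideanSpace ℝ (Fin d)) (l ^ (-κ - 3 * δ)),
            (‖((α - ‖p‖ ^ 2 / 2 : ℝ) : ℂ) + ((l ^ (2 + κ) : ℝ) : ℂ) * Complex.I‖ *
              (l ^ (2 + κ) + min ‖p - r‖ 1))⁻¹)
          ≤ C * (l ^ (-κ - 3 * δ)) ^ ((d : ℝ) - 2) * Real.log (1 / l ^ (2 + κ)) := by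
  set n : ℕ := Module.finrank ℝ (EuclideanSpace ℝ (Fin d)) with hn
  have hnd : n = d := by simp [hn]
  have : Nontrivial (EuclideanSpace ℝ (Fin d)) :=
    Module.nontrivial_of_finrank_pos (R := ℝ) (by omega)
  set μ : Measure (EuclideanSpace ℝ (Fin d)) := volume
  obtain ⟨M, hM, hMle⟩ := exists_lintegral_radial_mul_inv_le μ (by omega)
  set S := μ.toSphere univ
  have hStop : S ≠ ∞ := measure_ne_top _ _
  refine ⟨12 * (S.toReal + M.toReal) + 1, by positivity, 1 / 2, by norm_num,
    fun l hl hl' α r => ?_⟩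
  have hη : 0 < l ^ (2 + κ) := by positivity
  have hζ1 : 1 ≤ l ^ (-κ - 3 * δ) :=
    Real.one_le_rpow_of_pos_of_le_one_of_nonpos hl (by linarith) (by linarith [hκ.1, hδ.1])
  have hlog := log_one_add_cutoff_le hκ hδ hl hl'
  have hpow : (l ^ (-κ - 3 * δ)) ^ ((d : ℝ) - 2) = (l ^ (-κ - 3 * δ)) ^ (n - 2) := by
    rw [hnd, ← Real.rpow_natCast, Nat.cast_sub (by omega)]
    norm_num
  rw [hpow]
  set η := l ^ (2 + κ)
  set ζ := l ^ (-κ - 3 * δ)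
  have hlog0 : 0 ≤ Real.log (1 + ζ ^ 2 / η) := Real.log_nonneg (by
    have : 0 ≤ ζ ^ 2 / η := by positivity
    linarith)
  set F : ℝ → ℝ≥0∞ :=
    (Iic ζ).indicator fun ρ => ENNReal.ofReal (√((α - ρ ^ 2 / 2) ^ 2 + η ^ 2))⁻¹ with hF
  have hFm : Measurable F := Measurable.indicator (by fun_prop) measurableSet_Iic
  have hζpow : ζ ^ (n - 3) ≤ ζ ^ (n - 2) := pow_le_pow_right₀ hζ1 (by omega)
  have hregular : ∫⁻ p : EuclideanSpace ℝ (Fin d), F ‖p‖ ∂μ ≤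
      S * ENNReal.ofReal (ζ ^ (n - 2) * (2 * Real.log (1 + ζ ^ 2 / η))) := by
    have h := lintegral_radial_mul_angular μ hFm (H := fun _ => 1) measurable_const
    simp only [mul_one, lintegral_one] at h
    rw [h, ← hn, show n - 1 = n - 2 + 1 by omega]
    gcongr
    exact lintegral_pow_mul_indicator_resolvent_le α hη (by linarith) (n - 2)
  have hsingular : ∫⁻ p : EuclideanSpace ℝ (Fin d), F ‖p‖ * ‖p - r‖ₑ⁻¹ ∂μ ≤
      M * ENNReal.ofReal (ζ ^ (n - 2) * (2 * Real.log (1 + ζ ^ 2 / η))) := by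
    refine (hMle F r hFm).trans ?_
    gcongr
    rw [← hn, show n - 2 = n - 3 + 1 by omega]
    refine (lintegral_pow_mul_indicator_resolvent_le α hη (by linarith) (n - 3)).trans ?_
    rw [show n - 3 + 1 = n - 2 by omega]
    gcongr
  have hpoint : ∀ p ∈ closedBall (0 : EuclideanSpace ℝ (Fin d)) ζ,
      ENNReal.ofReal ((‖((α - ‖p‖ ^ 2 / 2 : ℝ) : ℂ) + ((η : ℝ) : ℂ) * Complex.I‖ *
        (η + min ‖p - r‖ 1))⁻¹) ≤ F ‖p‖ + F ‖p‖ * ‖p - r‖ₑ⁻¹ := by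
    intro p hp
    have hpζ : ‖p‖ ≤ ζ := by simpa using hp
    have hFp : F ‖p‖ = ENNReal.ofReal (√((α - ‖p‖ ^ 2 / 2) ^ 2 + η ^ 2))⁻¹ := by
      simp [hF, hpζ]
    rw [Complex.norm_add_mul_I, mul_inv, ENNReal.ofReal_mul (by positivity), hFp, ← mul_one_add]
    gcongr
    have hmin : 0 ≤ min ‖p - r‖ 1 := by positivity
    rw [ENNReal.ofReal_inv_of_pos (by positivity)]
    calc (ENNReal.ofReal (η + min ‖p - r‖ 1))⁻¹
        ≤ (min ‖p - r‖ₑ 1)⁻¹ := by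
          gcongr
          rw [← ofReal_norm, ← ENNReal.ofReal_one, ← ENNReal.ofReal_min]
          exact ENNReal.ofReal_le_ofReal (by linarith)
      _ ≤ 1 + ‖p - r‖ₑ⁻¹ := by
          rcases min_cases ‖p - r‖ₑ 1 with h | h <;> rw [h.1]
          · exact le_add_self
          · simp
  have hL0 : 0 ≤ Real.log (1 / η) := by linarith
  rw [integral_eq_lintegral_of_nonneg_ae]
  · refine ENNReal.toReal_le_of_le_ofReal (by positivity) ?_
    calc _ ≤ ∫⁻ p in closedBall (0 : EuclideanSpace ℝ (Fin d)) ζ,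
          (F ‖p‖ + F ‖p‖ * ‖p - r‖ₑ⁻¹) ∂μ := setLIntegral_mono' measurableSet_closedBall hpoint
      _ ≤ ∫⁻ p, (F ‖p‖ + F ‖p‖ * ‖p - r‖ₑ⁻¹) ∂μ := setLIntegral_le_lintegral _ _
      _ ≤ (S + M) * ENNReal.ofReal (ζ ^ (n - 2) * (2 * Real.log (1 + ζ ^ 2 / η))) := by
          rw [lintegral_add_left (by fun_prop), add_mul]
          exact add_le_add hregular hsingular
      _ = ENNReal.ofReal ((S.toReal + M.toReal) *
            (ζ ^ (n - 2) * (2 * Real.log (1 + ζ ^ 2 / η)))) := by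
          rw [ENNReal.ofReal_mul (p := S.toReal + M.toReal) (by positivity),
            ENNReal.ofReal_add (by positivity) (by positivity),
            ENNReal.ofReal_toReal hStop, ENNReal.ofReal_toReal hM]
      _ ≤ _ := by
          refine ENNReal.ofReal_le_ofReal ?_
          calc (S.toReal + M.toReal) * (ζ ^ (n - 2) * (2 * Real.log (1 + ζ ^ 2 / η)))
              ≤ (S.toReal + M.toReal) * (ζ ^ (n - 2) * (2 * (6 * Real.log (1 / η)))) := by gcongr
            _ = 12 * (S.toReal + M.toReal) * ζ ^ (n - 2) * Real.log (1 / η) := by ring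
            _ ≤ _ := by gcongr; linarith
  · refine Filter.Eventually.of_forall fun p => ?_
    have : 0 ≤ min ‖p - r‖ 1 := by positivity
    exact inv_nonneg.2 (by positivity)
  · exact (by fun_prop : Measurable _).aestronglyMeasurable
end

section
/- Let k ≥ 1 and let σ be a permutation of {1,…,k}. Suppose h_μ is an uncovered slope index which is not the largest element of I_v ∪ I_s, and let h_{μ+1} be the next element of I_v ∪ I_s after h_μ. Then there exists an index h with h_μ < h < h_{μ+1} such that h ∈ I_p, i.e., the point (σ^{−1}(h), h) is a peak. -/
/-- The entries of the matrix `M(σ)`, with row and column indices `i, j ∈ {1,…,k+1}`: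
`M(σ)_{ij} = 1` if `σ̃(j-1) < i ≤ σ̃(j)`, `M(σ)_{ij} = -1` if `σ̃(j) < i ≤ σ̃(j-1)`,
and `0` otherwise. -/
def MmatN (k : ℕ) (σ : Equiv.Perm (Fin k)) (i j : ℕ) : ℤ :=
  if sigmaTilde k σ (j - 1) < i ∧ i ≤ sigmaTilde k σ j then 1
  else if sigmaTilde k σ j < i ∧ i ≤ sigmaTilde k σ (j - 1) then -1
  else 0

/-- `t(j)`: the top (smallest row index) of the tower of nonzero entries in column `j`. -/
noncomputable def towerTop (k : ℕ) (σ : Equiv.Perm (Fin k)) (j : ℕ) : ℕ :=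
  sInf {i : ℕ | MmatN k σ i j ≠ 0}

/-- `b(j)`: the bottom (largest row index) of the tower of nonzero entries in column `j`. -/
noncomputable def towerBot (k : ℕ) (σ : Equiv.Perm (Fin k)) (j : ℕ) : ℕ :=
  sSup {i : ℕ | MmatN k σ i j ≠ 0}

/-- The set `I_p` of peak indices `i ∈ {1,…,k}` (the point `(σ⁻¹(i), i)` is a peak). -/
def peakSet (k : ℕ) (σ : Equiv.Perm (Fin k)) : Set ℕ :=
  {i | 1 ≤ i ∧ i ≤ k ∧ IsPeakAt k σ (sigmaTilde k σ⁻¹ i)}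

/-- The set `I_v` of valley indices `i ∈ {1,…,k}` (the point `(σ⁻¹(i), i)` is a valley). -/
def valleySet (k : ℕ) (σ : Equiv.Perm (Fin k)) : Set ℕ :=
  {i | 1 ≤ i ∧ i ≤ k ∧ IsValleyAt k σ (sigmaTilde k σ⁻¹ i)}

/-- The set `I_s` of slope indices `i ∈ {1,…,k}` (the point `(σ⁻¹(i), i)` is neither a
peak, nor a valley, nor a ladder). -/
def slopeSet (k : ℕ) (σ : Equiv.Perm (Fin k)) : Set ℕ :=
  {i | 1 ≤ i ∧ i ≤ k ∧ ¬IsPeakAt k σ (sigmaTilde k σ⁻¹ i) ∧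
    ¬IsValleyAt k σ (sigmaTilde k σ⁻¹ i) ∧ ¬IsLadderAt k σ (sigmaTilde k σ⁻¹ i)}

/-- The pivot column `c(i)`: for a non-peak index `i` this is the unique column `j` with
`b(j) = i`, except that for a valley index `i` (where both columns `σ̃⁻¹(i)` and
`σ̃⁻¹(i)+1` have bottom `i`) it is the one of these two columns with the smaller top. -/
noncomputable def pivotCol (k : ℕ) (σ : Equiv.Perm (Fin k)) (i : ℕ) : ℕ :=
  if IsValleyAt k σ (sigmaTilde k σ⁻¹ i) then
    if towerTop k σ (sigmaTilde k σ⁻¹ i) < towerTop k σ (sigmaTilde k σ⁻¹ i + 1) then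
      sigmaTilde k σ⁻¹ i
    else sigmaTilde k σ⁻¹ i + 1
  else sInf {j : ℕ | towerBot k σ j = i}

/-- The next element of `I_v ∪ I_s` strictly after `h`. -/
noncomputable def nextVS (k : ℕ) (σ : Equiv.Perm (Fin k)) (h : ℕ) : ℕ :=
  sInf {h' : ℕ | h' ∈ valleySet k σ ∪ slopeSet k σ ∧ h < h'}

/-- The set `I_cs` of covered slope indices: slope indices `h` such that there is a next
element `h'` of `I_v ∪ I_s` after `h` and `t(c(h')) ≤ h`. -/
def coveredSlopeSet (k : ℕ) (σ : Equiv.Perm (Fin k)) : Set ℕ :=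
  {h | h ∈ slopeSet k σ ∧ (∃ h' ∈ valleySet k σ ∪ slopeSet k σ, h < h') ∧
    towerTop k σ (pivotCol k σ (nextVS k σ h)) ≤ h}

/-- The set `I_us` of uncovered slope indices. -/
def uncoveredSlopeSet (k : ℕ) (σ : Equiv.Perm (Fin k)) : Set ℕ :=
  slopeSet k σ \ coveredSlopeSet k σ

theorem sigmaTilde_inv_leftInverse (k : ℕ) (σ : Equiv.Perm (Fin k)) :
    Function.LeftInverse (sigmaTilde k σ) (sigmaTilde k σ⁻¹) := by
  intro i
  by_cases hi : 1 ≤ i ∧ i ≤ k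
  · have hlt := (σ⁻¹ ⟨i - 1, by omega⟩).isLt
    simp only [sigmaTilde, hi, and_self, dite_true, Nat.add_sub_cancel]
    rw [dif_pos (by omega)]
    simp
    omega
  · simp [sigmaTilde, hi]

/-- The nonzero rows of column `j` form the half-open interval between the two adjacent values. -/
theorem setOf_MmatN_ne_zero (k : ℕ) (σ : Equiv.Perm (Fin k)) (j : ℕ) :
    {i : ℕ | MmatN k σ i j ≠ 0} =
      Set.Ioc (min (sigmaTilde k σ (j - 1)) (sigmaTilde k σ j))
        (max (sigmaTilde k σ (j - 1)) (sigmaTilde k σ j)) := by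
  ext i
  simp only [MmatN, Set.mem_ofPred_eq, Set.mem_Ioc]
  split_ifs <;> simp <;> omega

theorem min_sigmaTilde_lt_max (k : ℕ) (σ : Equiv.Perm (Fin k)) {j : ℕ} (hj : 1 ≤ j) :
    min (sigmaTilde k σ (j - 1)) (sigmaTilde k σ j) <
      max (sigmaTilde k σ (j - 1)) (sigmaTilde k σ j) :=
  min_lt_max.2 fun he => by
    have := sigmaTilde_injective k σ he
    omega

theorem towerTop_eq (k : ℕ) (σ : Equiv.Perm (Fin k)) {j : ℕ} (hj : 1 ≤ j) :
    towerTop k σ j = min (sigmaTilde k σ (j - 1)) (sigmaTilde k σ j) + 1 := by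
  have hlt := min_sigmaTilde_lt_max k σ hj
  rw [towerTop, setOf_MmatN_ne_zero]
  exact IsLeast.csInf_eq ⟨⟨by omega, by omega⟩, fun i hi => hi.1⟩

theorem towerBot_eq (k : ℕ) (σ : Equiv.Perm (Fin k)) {j : ℕ} (hj : 1 ≤ j) :
    towerBot k σ j = max (sigmaTilde k σ (j - 1)) (sigmaTilde k σ j) := by
  rw [towerBot, setOf_MmatN_ne_zero]
  exact csSup_Ioc (min_sigmaTilde_lt_max k σ hj)

theorem towerBot_zero (k : ℕ) (σ : Equiv.Perm (Fin k)) : towerBot k σ 0 = 0 := by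
  rw [towerBot, setOf_MmatN_ne_zero]
  simp

/-- If the pivot column of a valley or slope index `n` has top greater than `h`, then `n` has
a neighbouring value in `[h, n - 1)`. -/
theorem exists_adjacent_of_lt_towerTop_pivotCol {k : ℕ} {σ : Equiv.Perm (Fin k)} {h n : ℕ}
    (hn : n ∈ valleySet k σ ∪ slopeSet k σ) (ht : h < towerTop k σ (pivotCol k σ n)) :
    ∃ p q, (q = p + 1 ∨ p = q + 1) ∧ sigmaTilde k σ p = n ∧
      h ≤ sigmaTilde k σ q ∧ sigmaTilde k σ q + 1 < n := by
  have hp : sigmaTilde k σ (sigmaTilde k σ⁻¹ n) = n := sigmaTilde_inv_leftInverse k σ n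
  have hn1 : 1 ≤ n := by rcases hn with hn | hn <;> exact hn.1
  have hpos : 1 ≤ sigmaTilde k σ⁻¹ n := by
    by_contra h0
    rw [show sigmaTilde k σ⁻¹ n = 0 by omega, sigmaTilde_zero] at hp
    omega
  by_cases hv : IsValleyAt k σ (sigmaTilde k σ⁻¹ n)
  · rw [pivotCol, if_pos hv] at ht
    generalize sigmaTilde k σ⁻¹ n = p at *
    rw [IsValleyAt] at hv
    have h1 := towerTop_eq k σ hpos
    have h2 := towerTop_eq k σ (j := p + 1) (by omega)
    rw [Nat.add_sub_cancel] at h2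
    have hne : sigmaTilde k σ (p - 1) ≠ sigmaTilde k σ (p + 1) := fun he => by
      have := sigmaTilde_injective k σ he
      omega
    have hboth : h ≤ sigmaTilde k σ (p - 1) ∧ h ≤ sigmaTilde k σ (p + 1) := by
      split_ifs at ht <;> omega
    by_cases hc : sigmaTilde k σ (p + 1) + 1 < n
    · exact ⟨p, p + 1, Or.inl rfl, hp, hboth.2, hc⟩
    · exact ⟨p, p - 1, Or.inr (by omega), hp, hboth.1, by omega⟩
  · have hs : n ∈ slopeSet k σ := hn.resolve_left fun hn => hv hn.2.2
    obtain ⟨-, -, hnp, -, hnl⟩ := hs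
    rw [pivotCol, if_neg hv] at ht
    generalize sigmaTilde k σ⁻¹ n = p at *
    have hl : sigmaTilde k σ p - 1 ≠ sigmaTilde k σ (p - 1) ∧
        sigmaTilde k σ p - 1 ≠ sigmaTilde k σ (p + 1) := by
      constructor <;> intro he
      · exact hnl ⟨Or.inl he, hv⟩
      · exact hnl ⟨Or.inr he, hv⟩
    have hex : {j : ℕ | towerBot k σ j = n}.Nonempty := by
      rw [IsPeakAt] at hnp
      by_cases hc : sigmaTilde k σ (p - 1) ≤ n
      · refine ⟨p, ?_⟩
        rw [Set.mem_ofPred_eq, towerBot_eq k σ hpos]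
        omega
      · refine ⟨p + 1, ?_⟩
        rw [Set.mem_ofPred_eq, towerBot_eq k σ (by omega), Nat.add_sub_cancel]
        omega
    have hc : towerBot k σ (sInf {j : ℕ | towerBot k σ j = n}) = n := Nat.sInf_mem hex
    generalize sInf {j : ℕ | towerBot k σ j = n} = c at *
    have hc1 : 1 ≤ c := by
      by_contra h0
      rw [show c = 0 by omega, towerBot_zero] at hc
      omega
    obtain ⟨d, rfl⟩ : ∃ d, c = d + 1 := ⟨c - 1, by omega⟩
    have hlt := min_sigmaTilde_lt_max k σ hc1
    rw [towerBot_eq k σ hc1] at hc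
    rw [towerTop_eq k σ hc1] at ht
    rw [Nat.add_sub_cancel] at hlt hc ht
    rcases max_choice (sigmaTilde k σ d) (sigmaTilde k σ (d + 1)) with hm | hm
    · obtain rfl : p = d := sigmaTilde_injective k σ (by omega)
      exact ⟨p, p + 1, Or.inl rfl, hp, by omega, by omega⟩
    · obtain rfl : p = d + 1 := sigmaTilde_injective k σ (by omega)
      rw [Nat.add_sub_cancel] at hl
      exact ⟨d + 1, d, Or.inr rfl, hp, by omega, by omega⟩

/-- A positive value adjacent to both its successor and some larger value is a peak. -/
theorem isPeakAt_of_adjacent {k : ℕ} {σ : Equiv.Perm (Fin k)} {p q : ℕ}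
    (hadj : q = p + 1 ∨ p = q + 1) (hq : 1 ≤ sigmaTilde k σ q)
    (hlt : sigmaTilde k σ q + 1 < sigmaTilde k σ p)
    (hl : IsLadderAt k σ (sigmaTilde k σ⁻¹ (sigmaTilde k σ q + 1))) : IsPeakAt k σ q := by
  have hr : sigmaTilde k σ (sigmaTilde k σ⁻¹ (sigmaTilde k σ q + 1)) = sigmaTilde k σ q + 1 :=
    sigmaTilde_inv_leftInverse k σ _
  generalize sigmaTilde k σ⁻¹ (sigmaTilde k σ q + 1) = r at *
  have hr0 : r ≠ 0 := by
    rintro rfl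
    rw [sigmaTilde_zero] at hr
    omega
  have hrp : r ≠ p := by
    rintro rfl
    omega
  have hqr : q = r - 1 ∨ q = r + 1 := by
    rw [IsLadderAt, hr, Nat.add_sub_cancel] at hl
    exact hl.1.imp (fun he => sigmaTilde_injective k σ he) fun he => sigmaTilde_injective k σ he
  rw [IsPeakAt]
  rcases hadj with rfl | rfl
  · obtain rfl : r = p + 2 := by omega
    rw [Nat.add_sub_cancel]
    show _ < min _ (sigmaTilde k σ (p + 2))
    omega
  · obtain rfl : q = r + 1 := by omega
    rw [Nat.add_sub_cancel]
    omega

/-- Claim 2 in the proof of the paper's Lemma 8.4: if `h` is an uncovered slope index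
which is not the largest element of `I_v ∪ I_s`, then there is a peak index strictly
between `h` and the next element of `I_v ∪ I_s` after `h`. -/
theorem peak_between_uncovered_slope_and_next
    (k : ℕ) (hk : 1 ≤ k) (σ : Equiv.Perm (Fin k)) (h : ℕ)
    (hus : h ∈ uncoveredSlopeSet k σ)
    (hnext : ∃ h' ∈ valleySet k σ ∪ slopeSet k σ, h < h') :
    ∃ m : ℕ, h < m ∧ m < nextVS k σ h ∧ m ∈ peakSet k σ := by
  have hmem : nextVS k σ h ∈ valleySet k σ ∪ slopeSet k σ ∧ h < nextVS k σ h :=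
    Nat.sInf_mem (s := {h' | h' ∈ valleySet k σ ∪ slopeSet k σ ∧ h < h'}) hnext
  have hmin : ∀ m, h < m → m < nextVS k σ h → m ∉ valleySet k σ ∪ slopeSet k σ :=
    fun m hm hlt hvs => Nat.notMem_of_lt_sInf hlt ⟨hvs, hm⟩
  obtain ⟨hs, hnc⟩ := hus
  have ht : h < towerTop k σ (pivotCol k σ (nextVS k σ h)) :=
    not_le.1 fun hle => hnc ⟨hs, hnext, hle⟩
  obtain ⟨p, q, hadj, hp, hhq, hqn⟩ := exists_adjacent_of_lt_towerTop_pivotCol hmem.1 ht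
  have hnk : nextVS k σ h ≤ k := by rcases hmem.1 with hn | hn <;> exact hn.2.1
  have hh1 : 1 ≤ h := hs.1
  by_cases hpk : IsPeakAt k σ (sigmaTilde k σ⁻¹ (sigmaTilde k σ q + 1))
  · exact ⟨sigmaTilde k σ q + 1, by omega, hqn, by omega, by omega, hpk⟩
  have hnvs := hmin (sigmaTilde k σ q + 1) (by omega) hqn
  have hl : IsLadderAt k σ (sigmaTilde k σ⁻¹ (sigmaTilde k σ q + 1)) := by
    by_contra hl
    exact hnvs (Or.inr ⟨by omega, by omega, hpk,
      fun hv => hnvs (Or.inl ⟨by omega, by omega, hv⟩), hl⟩)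
  have hpeak := isPeakAt_of_adjacent hadj (by omega) (by omega) hl
  have hqinv : sigmaTilde k σ⁻¹ (sigmaTilde k σ q) = q := by
    simpa using sigmaTilde_inv_leftInverse k σ⁻¹ q
  have hne : h ≠ sigmaTilde k σ q := by
    rintro rfl
    exact hs.2.2.1 (by rwa [hqinv])
  exact ⟨sigmaTilde k σ q, by omega, by omega, by omega, by omega, by rwa [hqinv]⟩
end
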